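/- arXiv:math/0010292 — 3 statements merged into one kernel-verified Lean document; each statement's English description precedes it below -/
import Mathlib

section
/- Let X and Y be realcompact completely regular Hausdorff topological spaces, let E and F be nonzero normed spaces over 𝕂, and let T : C(X,E) → C(Y,F) be a biseparating map. Then there exists a homeomorphism h : Y → X such that for every f ∈ C(X,E) and every y ∈ Y, if f vanishes identically on some neighborhood of h(y), then Tf vanishes identically on some neighborhood of y. -/
open Filter Topology

/-- A topological space is realcompact if it admits a closed topological embedding
into a product `ℝ^ι` of copies of `ℝ`. -/
def Realcompact (X : Type) [TopologicalSpace X] : Prop :=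
  ∃ (ι : Type) (e : X → ι → ℝ), IsClosedEmbedding e

/-- A map between spaces of continuous vector-valued functions is separating if it maps
pairs of functions with disjoint cozero sets to pairs of functions with disjoint cozero sets. -/
def SeparatingC {X Y E F : Type} [TopologicalSpace X] [TopologicalSpace Y]
    [NormedAddCommGroup E] [NormedAddCommGroup F] (T : C(X, E) → C(Y, F)) : Prop :=
  ∀ f g : C(X, E), (∀ x, ‖f x‖ * ‖g x‖ = 0) → ∀ y, ‖T f y‖ * ‖T g y‖ = 0

/-!
A point `y : Y` gives the additive map `f ↦ T f y`, and a partition of unity on the compact space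
`βX` shows that this map has a support point in `βX`. When `T` is separating, `T f y` depends only
on the germ of `f` at the support point. It follows that the support point varies continuously with
`y`, and it extends to a continuous map `βY → βX` over which `T` acts on germs. The identity acts on
germs only over the identity, hence the maps obtained from `T` and `T⁻¹` are mutually inverse
homeomorphisms.

If `X` is realcompact and the image of some `y : Y` were a point `z ∈ βX \ X`, there would be a
continuous `w : X → ℝ` tending to `+∞` at `z`. Since `T` is merely additive, `w` is first modified
to be locally a constant integer `n` at points `x` arbitrarily close to `z`. If `T f` is a nonzero
constant `c`, then `T (w • f)` is equal to `n • c` near the points corresponding to such `x`, so it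
is unbounded near `y`, which contradicts its continuity.
-/

theorem exists_homeomorph_comp_eq_of_range_eq {X Y Z : Type*} [TopologicalSpace X]
    [TopologicalSpace Y] [TopologicalSpace Z] {i : Y → Z} {j : X → Z} (hi : IsEmbedding i)
    (hj : IsEmbedding j) (hij : Set.range i = Set.range j) : ∃ h : Y ≃ₜ X, ∀ y, j (h y) = i y := by
  refine ⟨(hi.toHomeomorph.trans (.setCongr hij)).trans hj.toHomeomorph.symm, fun y => ?_⟩
  exact congrArg Subtype.val (hj.toHomeomorph.apply_symm_apply ⟨i y, hij ▸ Set.mem_range_self y⟩)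

section StoneCechTrace

variable {X Y : Type*} [TopologicalSpace X] [TopologicalSpace Y]

/-- The trace on `X` of the neighbourhood filter of a point `z` of the Stone–Čech compactification.
Germs of functions on `X` at `z` are germs along this filter. -/
def stoneCechTrace (z : StoneCech X) : Filter X :=
  comap stoneCechUnit (𝓝 z)

instance stoneCechTrace_neBot (z : StoneCech X) : (stoneCechTrace z).NeBot :=
  comap_neBot_iff_frequently.2 <| by
    simpa using mem_closure_iff_frequently.1 (denseRange_stoneCechUnit z)

theorem stoneCechTrace_stoneCechUnit [CompletelyRegularSpace X] (x : X) :
    stoneCechTrace (stoneCechUnit x) = 𝓝 x :=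
  (isInducing_stoneCechUnit.nhds_eq_comap x).symm

theorem tendsto_stoneCechUnit_stoneCechTrace (z : StoneCech X) :
    Tendsto stoneCechUnit (stoneCechTrace z) (𝓝 z) :=
  tendsto_comap

theorem eventually_eventually_stoneCechTrace {z : StoneCech X} {p : X → Prop}
    (hp : ∀ᶠ x in stoneCechTrace z, p x) : ∀ᶠ z' in 𝓝 z, ∀ᶠ x in stoneCechTrace z', p x := by
  filter_upwards [eventually_eventually_nhds.2 (eventually_comap.1 hp)] with z' hz'
  exact eventually_comap.2 hz'

theorem eventually_stoneCechTrace_comp {H : StoneCech Y → StoneCech X} (hH : Continuous H)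
    {z : StoneCech Y} {p : X → Prop} (hp : ∀ᶠ x in stoneCechTrace (H z), p x) :
    ∀ᶠ y in stoneCechTrace z, ∀ᶠ x in stoneCechTrace (H (stoneCechUnit y)), p x :=
  ((hH.tendsto z).comp (tendsto_stoneCechUnit_stoneCechTrace z)).eventually
    (eventually_eventually_stoneCechTrace hp)

theorem exists_eventuallyEq_zero_eventually_ne_zero (E : Type*) [AddCommGroup E]
    [TopologicalSpace E] [Module ℝ E] [ContinuousSMul ℝ E] [Nontrivial E] {z w : StoneCech X}
    (hzw : z ≠ w) :
    ∃ f : C(X, E), f =ᶠ[stoneCechTrace z] 0 ∧ ∀ᶠ x in stoneCechTrace w, f x ≠ 0 := by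
  obtain ⟨V, hV, hVc, hVw⟩ := exists_mem_nhds_isClosed_subset (isOpen_ne.mem_nhds hzw)
  obtain ⟨ψ, hψV, hψw, -⟩ := exists_continuous_zero_one_of_isClosed hVc
    (isClosed_singleton (x := w)) (Set.disjoint_singleton_right.2 fun hw => hVw hw rfl)
  obtain ⟨c, hc⟩ := exists_ne (0 : E)
  have hψ : ψ w ≠ 0 := by simp [hψw rfl]
  refine ⟨ψ.comp ⟨stoneCechUnit, continuous_stoneCechUnit⟩ • ContinuousMap.const X c, ?_, ?_⟩
  · filter_upwards [(tendsto_stoneCechUnit_stoneCechTrace z).eventually hV] with x hx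
    simp [hψV hx]
  · filter_upwards [(tendsto_stoneCechUnit_stoneCechTrace w).eventually
      (ψ.continuous.continuousAt.eventually_ne hψ)] with x hx
    exact smul_ne_zero hx hc

end StoneCechTrace

section LocalOver

variable {X Y Z E F G : Type*} [TopologicalSpace X] [TopologicalSpace Y] [TopologicalSpace Z]
  [TopologicalSpace E] [TopologicalSpace F] [TopologicalSpace G]

/-- `T` is local over `H : βY → βX` if the germ of `T f` at each `z : βY` depends only on the germ
of `f` at `H z`; such an `H` is called a support map of `T`. Continuity of `H` is not part of the
definition. -/
def IsLocalOver (T : C(X, E) → C(Y, F)) (H : StoneCech Y → StoneCech X) : Prop :=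
  ∀ ⦃z : StoneCech Y⦄ ⦃f g : C(X, E)⦄,
    f =ᶠ[stoneCechTrace (H z)] g → T f =ᶠ[stoneCechTrace z] T g

theorem IsLocalOver.comp {S : C(Y, F) → C(Z, G)} {T : C(X, E) → C(Y, F)}
    {K : StoneCech Z → StoneCech Y} {H : StoneCech Y → StoneCech X}
    (hS : IsLocalOver S K) (hT : IsLocalOver T H) : IsLocalOver (S ∘ T) (H ∘ K) :=
  fun _ _ _ hfg => hS (hT hfg)

theorem IsLocalOver.eq_id [AddCommGroup E] [Module ℝ E] [ContinuousSMul ℝ E] [Nontrivial E]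
    {H : StoneCech X → StoneCech X}
    (hH : IsLocalOver (id : C(X, E) → C(X, E)) H) : H = id := by
  funext z
  by_contra hz
  obtain ⟨f, hf, hf'⟩ := exists_eventuallyEq_zero_eventually_ne_zero E hz
  have hfz : f =ᶠ[stoneCechTrace z] 0 := hH (g := 0) hf
  obtain ⟨x, hx, hx'⟩ := (hfz.and hf').exists
  exact hx' hx

end LocalOver

section SupportPoint

variable {X E A : Type*} [TopologicalSpace X]

/-- A point `z` of the Stone–Čech compactification of `X` is a support point of the map `φ` on
`C(X, E)` if `φ` does not vanish on the functions supported in any given neighbourhood of `z`. -/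
def IsSupportPoint [TopologicalSpace E] [Zero E] [Zero A] (φ : C(X, E) → A) (z : StoneCech X) :
    Prop :=
  ∀ U ∈ 𝓝 z, ∃ f : C(X, E), Function.support f ⊆ stoneCechUnit ⁻¹' U ∧ φ f ≠ 0

theorem exists_sum_eq_of_iUnion_eq_univ [AddCommMonoid E] [TopologicalSpace E] [ContinuousAdd E]
    [Module ℝ E] [ContinuousSMul ℝ E] {ι : Type*} [Fintype ι] {U : ι → Set (StoneCech X)}
    (hUo : ∀ i, IsOpen (U i)) (hU : ⋃ i, U i = Set.univ) (f : C(X, E)) :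
    ∃ g : ι → C(X, E), ∑ i, g i = f ∧ ∀ i, Function.support (g i) ⊆ stoneCechUnit ⁻¹' U i := by
  obtain ⟨ρ, hρ⟩ := PartitionOfUnity.exists_isSubordinate isClosed_univ U hUo hU.ge
  refine ⟨fun i => (ρ i).comp ⟨stoneCechUnit, continuous_stoneCechUnit⟩ • f, ?_, fun i x hx => ?_⟩
  · ext x
    have hsum : ∑ i, ρ i (stoneCechUnit x) = 1 := by
      rw [← finsum_eq_sum_of_fintype, ρ.sum_eq_one (Set.mem_univ _)]
    simp [← Finset.sum_smul, hsum]
  · exact hρ i (subset_tsupport _ (left_ne_zero_of_smul hx))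

theorem exists_isSupportPoint [AddCommMonoid E] [TopologicalSpace E] [ContinuousAdd E]
    [Module ℝ E] [ContinuousSMul ℝ E] [AddCommMonoid A] {φ : C(X, E) →+ A} (hφ : φ ≠ 0) :
    ∃ z : StoneCech X, IsSupportPoint φ z := by
  by_contra! hcon
  simp only [IsSupportPoint, not_forall, not_exists, not_and, not_not] at hcon
  choose U hU hφU using hcon
  obtain ⟨t, ht⟩ := CompactSpace.elim_nhds_subcover (fun z => interior (U z))
    (fun z => interior_mem_nhds.2 (hU z))
  refine hφ (DFunLike.ext φ 0 fun f => ?_)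
  obtain ⟨g, rfl, hg⟩ := exists_sum_eq_of_iUnion_eq_univ (U := fun z : t => interior (U z))
    (fun _ => isOpen_interior) ((Set.iUnion_subtype _ _).trans ht) f
  rw [map_sum]
  exact Finset.sum_eq_zero fun z _ =>
    hφU z (g z) ((hg z).trans (Set.preimage_mono interior_subset))

end SupportPoint

section Separating

variable {X Y E F : Type} [TopologicalSpace X] [TopologicalSpace Y]
  [NormedAddCommGroup E] [NormedAddCommGroup F]

theorem SeparatingC.disjoint_support {T : C(X, E) → C(Y, F)} (hT : SeparatingC T) {f g : C(X, E)}
    (hfg : Disjoint (Function.support f) (Function.support g)) :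
    Disjoint (Function.support (T f)) (Function.support (T g)) := by
  simp only [Set.disjoint_left, Function.mem_support, not_not] at hfg ⊢
  intro y hy
  have hprod := hT f g (fun x => by by_cases hx : f x = 0 <;> simp [hx, hfg]) y
  simpa [hy] using hprod

theorem SeparatingC.apply_eq_zero_of_isSupportPoint {T : C(X, E) → C(Y, F)} (hT : SeparatingC T)
    {y : Y} {z : StoneCech X} (hz : IsSupportPoint (fun f => T f y) z) {f : C(X, E)}
    (hf : f =ᶠ[stoneCechTrace z] 0) : T f y = 0 := by
  obtain ⟨U, hU, hUf⟩ := mem_comap.1 hf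
  obtain ⟨g, hgU, hgy⟩ := hz U hU
  have hfg : Disjoint (Function.support f) (Function.support g) :=
    Set.disjoint_left.2 fun x hfx hgx => hfx (hUf (hgU hgx))
  by_contra hfy
  exact Set.disjoint_left.1 (hT.disjoint_support hfg) hfy hgy

theorem SeparatingC.continuous_of_isSupportPoint {T : C(X, E) → C(Y, F)} (hT : SeparatingC T)
    {h : Y → StoneCech X} (hh : ∀ y, IsSupportPoint (fun f => T f y) (h y)) : Continuous h := by
  refine continuous_iff_continuousAt.2 fun y U hU => ?_
  obtain ⟨V, hV, hVc, hVU⟩ := exists_mem_nhds_isClosed_subset hU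
  obtain ⟨f, hfV, hfy⟩ := hh y V hV
  refine mem_map.2 ?_
  filter_upwards [(T f).continuous.continuousAt.eventually_ne hfy] with y' hy'
  by_contra hU'
  refine hy' (hT.apply_eq_zero_of_isSupportPoint (hh y') ?_)
  filter_upwards [(tendsto_stoneCechUnit_stoneCechTrace _).eventually
    (hVc.isOpen_compl.mem_nhds fun hV' => hU' (hVU hV'))] with x hx
  exact Function.notMem_support.1 fun hfx => hx (hfV hfx)

theorem SeparatingC.isLocalOver_stoneCechExtend {T : C(X, E) →+ C(Y, F)} (hT : SeparatingC T)
    {h : Y → StoneCech X} (hh : ∀ y, IsSupportPoint (fun f => T f y) (h y)) :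
    IsLocalOver T (stoneCechExtend (hT.continuous_of_isSupportPoint hh)) := by
  intro z f g hfg
  have hsub : ∀ᶠ x in stoneCechTrace (stoneCechExtend (hT.continuous_of_isSupportPoint hh) z),
      (f - g) x = 0 := hfg.mono fun x hx => sub_eq_zero.2 hx
  filter_upwards [eventually_stoneCechTrace_comp (continuous_stoneCechExtend _) hsub] with y hy
  rw [stoneCechExtend_stoneCechUnit] at hy
  have hTy : T (f - g) y = 0 := hT.apply_eq_zero_of_isSupportPoint (hh y) hy
  rwa [map_sub, ContinuousMap.sub_apply, sub_eq_zero] at hTy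

theorem SeparatingC.exists_continuous_isLocalOver [NormedSpace ℝ E] [Nontrivial F]
    {T : C(X, E) →+ C(Y, F)} (hT : SeparatingC T) (hsurj : Function.Surjective T) :
    ∃ H : StoneCech Y → StoneCech X, Continuous H ∧ IsLocalOver T H := by
  obtain ⟨c, hc⟩ := exists_ne (0 : F)
  obtain ⟨f, hf⟩ := hsurj (ContinuousMap.const Y c)
  let φ (y : Y) : C(X, E) →+ F :=
    ((Pi.evalAddMonoidHom _ y).comp ContinuousMap.coeFnAddMonoidHom).comp T
  have hφ (y : Y) : φ y ≠ 0 := fun h0 => hc <| by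
    simpa [φ, hf] using DFunLike.congr_fun h0 f
  choose h hh using fun y => exists_isSupportPoint (hφ y)
  exact ⟨_, continuous_stoneCechExtend _, hT.isLocalOver_stoneCechExtend hh⟩

theorem SeparatingC.exists_homeomorph_stoneCech [NormedSpace ℝ E] [NormedSpace ℝ F] [Nontrivial E]
    [Nontrivial F] {T : C(X, E) ≃+ C(Y, F)} (hT : SeparatingC T) (hT' : SeparatingC T.symm) :
    ∃ H : StoneCech Y ≃ₜ StoneCech X, IsLocalOver T H ∧ IsLocalOver T.symm H.symm := by
  obtain ⟨H, hHc, hH⟩ := hT.exists_continuous_isLocalOver (T := T.toAddMonoidHom) T.surjective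
  obtain ⟨K, hKc, hK⟩ :=
    hT'.exists_continuous_isLocalOver (T := T.symm.toAddMonoidHom) T.symm.surjective
  have hKH : K ∘ H = id := IsLocalOver.eq_id (E := F) <| by
    simpa using hH.comp hK
  have hHK : H ∘ K = id := IsLocalOver.eq_id (E := E) <| by
    simpa using hK.comp hH
  exact ⟨⟨⟨H, K, congrFun hKH, congrFun hHK⟩, hHc, hKc⟩, hH, hK⟩

end Separating

section Realcompactness

theorem tendsto_cocompact_or_exists_tendsto_nhds {X W : Type*} [TopologicalSpace X]
    [TopologicalSpace W] [LocallyCompactSpace W] [T2Space W] {g : X → W} (hg : Continuous g)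
    (z : StoneCech X) :
    Tendsto g (stoneCechTrace z) (cocompact W) ∨
      ∃ r, Tendsto g (stoneCechTrace z) (𝓝 r) := by
  have hgc : Continuous fun x => (g x : OnePoint W) := OnePoint.continuous_coe.comp hg
  have hlim : Tendsto (fun x => (g x : OnePoint W)) (stoneCechTrace z)
      (𝓝 (stoneCechExtend hgc z)) := by
    simpa [Function.comp_def] using ((continuous_stoneCechExtend hgc).tendsto z).comp
      (tendsto_stoneCechUnit_stoneCechTrace z)
  rcases eq_or_ne (stoneCechExtend hgc z) OnePoint.infty with hz | hz
  · left
    rw [← coclosedCompact_eq_cocompact, ← OnePoint.comap_coe_nhds_infty, tendsto_comap_iff]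
    exact hz ▸ hlim
  · right
    obtain ⟨r, hr⟩ := OnePoint.ne_infty_iff_exists.1 hz
    exact ⟨r, OnePoint.isOpenEmbedding_coe.tendsto_nhds_iff.2 (hr ▸ hlim)⟩

theorem Realcompact.exists_tendsto_atTop {X : Type} [TopologicalSpace X] (hX : Realcompact X)
    {z : StoneCech X} (hz : z ∉ Set.range stoneCechUnit) :
    ∃ u : C(X, ℝ), Tendsto u (stoneCechTrace z) atTop := by
  obtain ⟨ι, e, he⟩ := hX
  have hei (i : ι) : Continuous fun x => e x i := (continuous_apply i).comp he.continuous
  by_contra! hbdd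
  have hlim (i : ι) : ∃ r, Tendsto (fun x => e x i) (stoneCechTrace z) (𝓝 r) :=
    (tendsto_cocompact_or_exists_tendsto_nhds (hei i) z).resolve_left fun hcpt =>
      hbdd ⟨fun x => ‖e x i‖, (hei i).norm⟩ (tendsto_norm_cocompact_atTop.comp hcpt)
  choose r hr using hlim
  have her : Tendsto e (stoneCechTrace z) (𝓝 r) := tendsto_pi_nhds.2 hr
  obtain ⟨x, rfl⟩ : r ∈ Set.range e := he.isClosed_range.mem_of_tendsto her
    (Eventually.of_forall Set.mem_range_self)
  have hx : stoneCechTrace z ≤ 𝓝 x := by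
    rw [he.isInducing.nhds_eq_comap]
    exact tendsto_iff_comap.1 her
  exact hz ⟨x, tendsto_nhds_unique ((continuous_stoneCechUnit.tendsto x).mono_left hx)
    (tendsto_stoneCechUnit_stoneCechTrace z)⟩

end Realcompactness

section Staircase

/-- A continuous real function that is equal to `n` on `(n - 3/8, n + 3/8)` for every integer `n`
and affine in between; composing with it makes a real function locally an integer constant wherever
it is close to an integer. The function subtracted from `t` is `1`-periodic and equals the signed
distance from `t` to the nearest integer as long as this distance is at most `3/8`. -/
noncomputable def staircase : C(ℝ, ℝ) where
  toFun t := t - min (Int.fract t) (max (Int.fract t - 1) (3 / 2 - 3 * Int.fract t))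
  continuous_toFun := by
    refine continuous_id.sub (ContinuousOn.comp_fract''
      (f := fun s : ℝ => min s (max (s - 1) (3 / 2 - 3 * s))) (by fun_prop) ?_)
    norm_num

theorem staircase_eq_intCast {t : ℝ} {n : ℤ} (ht : |t - n| < 3 / 8) : staircase t = n := by
  obtain ⟨hlo, hhi⟩ := abs_lt.1 ht
  have hfract := Int.self_sub_floor t
  have hfloor : ⌊t⌋ = n ∨ ⌊t⌋ = n - 1 := by
    have h₁ : n - 1 ≤ ⌊t⌋ := Int.le_floor.2 (by push_cast; linarith)
    have h₂ : ⌊t⌋ < n + 1 := Int.floor_lt.2 (by push_cast; linarith)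
    lia
  simp only [staircase, ContinuousMap.coe_mk]
  rcases hfloor with h | h <;> rw [h] at hfract
  · rw [min_eq_left (le_max_of_le_right (by linarith))]
    linarith
  · push_cast at hfract
    rw [max_eq_left (by linarith), min_eq_right (by linarith)]
    linarith

theorem sub_one_le_staircase (t : ℝ) : t - 1 ≤ staircase t := by
  have hmin := min_le_left (Int.fract t) (max (Int.fract t - 1) (3 / 2 - 3 * Int.fract t))
  simp only [staircase, ContinuousMap.coe_mk]
  linarith [Int.fract_lt_one t]

theorem exists_abs_sub_intCast_lt_or (t : ℝ) :
    (∃ n : ℤ, |t - n| < 3 / 8) ∨ ∃ n : ℤ, |t + 1 / 2 - n| < 3 / 8 := by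
  obtain ⟨hlo, hhi⟩ := abs_le.1 (abs_sub_round t)
  by_cases hpos : 3 / 8 ≤ t - round t
  · refine .inr ⟨round t + 1, ?_⟩
    push_cast
    exact abs_lt.2 ⟨by linarith, by linarith⟩
  by_cases hneg : t - round t ≤ -(3 / 8)
  · exact .inr ⟨round t, abs_lt.2 ⟨by linarith, by linarith⟩⟩
  · exact .inl ⟨round t, abs_lt.2 ⟨by linarith, by linarith⟩⟩

theorem exists_tendsto_atTop_frequently_locally_intCast {X : Type*} [TopologicalSpace X]
    {l : Filter X} [l.NeBot] {u : C(X, ℝ)} (hu : Tendsto u l atTop) :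
    ∃ w : C(X, ℝ), Tendsto w l atTop ∧ ∃ᶠ x in l, ∃ n : ℤ, ∀ᶠ x' in 𝓝 x, w x' = n := by
  obtain ⟨v, hv, hvn⟩ : ∃ v : C(X, ℝ), Tendsto v l atTop ∧
      ∃ᶠ x in l, ∃ n : ℤ, |v x - n| < 3 / 8 := by
    have hor : ∃ᶠ x in l, _ := .of_forall fun x => exists_abs_sub_intCast_lt_or (u x)
    rcases frequently_or_distrib.1 hor with h | h
    · exact ⟨u, hu, h⟩
    · exact ⟨u + ContinuousMap.const X (1 / 2), tendsto_atTop_add_const_right _ _ hu, h⟩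
  refine ⟨staircase.comp v, ?_, hvn.mono fun x ⟨n, hn⟩ => ⟨n, ?_⟩⟩
  · exact tendsto_atTop_mono (fun x => sub_one_le_staircase (v x))
      (tendsto_atTop_add_const_right _ (-1) hv)
  · have hcont : Continuous fun x' => |v x' - n| := by fun_prop
    exact (hcont.continuousAt.eventually_lt continuousAt_const hn).mono
      fun x' => staircase_eq_intCast

end Staircase

theorem IsLocalOver.apply_stoneCechUnit_mem_range {X : Type} {Y E F : Type*} [TopologicalSpace X]
    [CompletelyRegularSpace X] (hX : Realcompact X) [TopologicalSpace Y] [CompletelyRegularSpace Y]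
    [AddCommGroup E] [TopologicalSpace E] [IsTopologicalAddGroup E] [Module ℝ E]
    [ContinuousSMul ℝ E] [NormedAddCommGroup F] [NormedSpace ℝ F] [Nontrivial F]
    {T : C(X, E) →+ C(Y, F)} (hsurj : Function.Surjective T) {H : StoneCech Y ≃ₜ StoneCech X}
    (hH : IsLocalOver T H) (y : Y) : H (stoneCechUnit y) ∈ Set.range stoneCechUnit := by
  by_contra hy
  obtain ⟨u, hu⟩ := hX.exists_tendsto_atTop hy
  obtain ⟨w, hw, hwn⟩ := exists_tendsto_atTop_frequently_locally_intCast hu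
  obtain ⟨c, hc⟩ := exists_ne (0 : F)
  obtain ⟨f, hf⟩ := hsurj (ContinuousMap.const Y c)
  set M := ‖T (w • f) y‖ + 1
  have hbdd : ∀ᶠ y' in stoneCechTrace (H.symm (H (stoneCechUnit y))), ‖T (w • f) y'‖ < M := by
    rw [H.symm_apply_apply, stoneCechTrace_stoneCechUnit]
    exact (T (w • f)).continuous.norm.continuousAt.eventually_lt continuousAt_const (lt_add_one _)
  obtain ⟨x, ⟨n, hn⟩, hxM, hMw⟩ := (hwn.and_eventually
    ((eventually_stoneCechTrace_comp H.symm.continuous hbdd).and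
      (hw.eventually_ge_atTop (M / ‖c‖)))).exists
  have hgerm : ⇑(w • f) =ᶠ[stoneCechTrace (H (H.symm (stoneCechUnit x)))] ⇑(n • f) := by
    rw [H.apply_symm_apply, stoneCechTrace_stoneCechUnit]
    filter_upwards [hn] with x' hx'
    simp [hx', Int.cast_smul_eq_zsmul]
  obtain ⟨y', hy', hy'M⟩ := ((hH hgerm).and hxM).exists
  have hMn : M / ‖c‖ ≤ n := hn.self_of_nhds ▸ hMw
  have hM : M ≤ ‖T (w • f) y'‖ := calc
    M ≤ n * ‖c‖ := (div_le_iff₀ (norm_pos_iff.2 hc)).1 hMn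
    _ ≤ ‖(n : ℝ)‖ * ‖c‖ := by gcongr; exact Real.le_norm_self _
    _ = ‖T (w • f) y'‖ := by
      rw [hy', map_zsmul, hf, ContinuousMap.smul_apply, ContinuousMap.const_apply,
        ← Int.cast_smul_eq_zsmul ℝ, norm_smul]
  exact hM.not_gt hy'M

theorem stmt0 {𝕂 X Y E F : Type} [RCLike 𝕂]
    [TopologicalSpace X] [CompletelyRegularSpace X] [T2Space X]
    [TopologicalSpace Y] [CompletelyRegularSpace Y] [T2Space Y]
    [NormedAddCommGroup E] [NormedSpace 𝕂 E] [Nontrivial E]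
    [NormedAddCommGroup F] [NormedSpace 𝕂 F] [Nontrivial F]
    (hX : Realcompact X) (hY : Realcompact Y)
    (T : C(X, E) ≃+ C(Y, F)) (hT : SeparatingC ⇑T) (hT' : SeparatingC ⇑T.symm) :
    ∃ h : Y ≃ₜ X, ∀ (f : C(X, E)) (y : Y),
      (∀ᶠ x in 𝓝 (h y), f x = 0) → ∀ᶠ y' in 𝓝 y, T f y' = 0 := by
  let _ : NormedSpace ℝ E := NormedSpace.restrictScalars ℝ 𝕂 E
  let _ : NormedSpace ℝ F := NormedSpace.restrictScalars ℝ 𝕂 F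
  have : T35Space X := {}
  have : T35Space Y := {}
  obtain ⟨H, hH, hH'⟩ := hT.exists_homeomorph_stoneCech hT'
  have hHX : ∀ y, H (stoneCechUnit y) ∈ Set.range stoneCechUnit :=
    IsLocalOver.apply_stoneCechUnit_mem_range hX (T := T.toAddMonoidHom) T.surjective hH
  have hHY : ∀ x, H.symm (stoneCechUnit x) ∈ Set.range stoneCechUnit :=
    IsLocalOver.apply_stoneCechUnit_mem_range hY (T := T.symm.toAddMonoidHom) T.symm.surjective hH'
  have hrange : Set.range (H ∘ stoneCechUnit) = Set.range (stoneCechUnit : X → StoneCech X) := by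
    refine (Set.range_subset_iff.2 hHX).antisymm (Set.range_subset_iff.2 fun x => ?_)
    obtain ⟨y, hy⟩ := hHY x
    exact ⟨y, by simp [hy]⟩
  obtain ⟨h, hh⟩ := exists_homeomorph_comp_eq_of_range_eq
    (H.isEmbedding.comp isEmbedding_stoneCechUnit) isEmbedding_stoneCechUnit hrange
  refine ⟨h, fun f y hf => ?_⟩
  rw [← stoneCechTrace_stoneCechUnit, hh] at hf
  have hTf : T f =ᶠ[stoneCechTrace (stoneCechUnit y)] T 0 := hH hf
  simpa [stoneCechTrace_stoneCechUnit, EventuallyEq] using hTf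
end

section
/- Let X and Y be realcompact completely regular Hausdorff topological spaces, let E and F be nonzero normed spaces over 𝕂, and let T : C(X,E) → C(Y,F) be a 𝕂-linear biseparating map. Then there exist a homeomorphism h : Y → X and, for each y ∈ Y, a bijective (not necessarily continuous) 𝕂-linear map J_y : E → F such that (Tf)(y) = J_y(f(h(y))) for every f ∈ C(X,E) and every y ∈ Y. -/
open Filter Topology

/-!
Fix `y : Y`. Embedding `X` in the compact space `ι → [-∞, ∞]`, a partition of unity shows that the
values `T f y` depend only on the germ of `f` along the trace on `X` of a neighbourhood filter of
some point `p`.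

The heart of the argument is that `T f y = 0` as soon as there is a function `s` tending to `∞`
along this trace on the support of `f` and such that `s • f` is still continuous. Cut `f` by
`sin² (π s)` into pieces `bₙ` living on the annuli `{n < s < n + 1}`. Since `T` maps functions with
disjoint supports to such functions, `∑ₙ n • bₙ` is mapped to a function which is `n` times larger
than `T f` on the support of `T bₙ`, and the supports of the `T bₙ` with `n` large accumulate at `y`
if `T f y ≠ 0`; this contradicts the continuity of `T (∑ₙ n • bₙ)` at `y`. The complementary cut by
`cos² (π s)` is the same one for `s + 1 / 2`.

If `p` had no preimage in `X`, then, as `X` is closed in `ι → ℝ`, some coordinate of `p` would be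
infinite; its absolute value could serve as `s` for every `f`, and `T` would vanish at `y`. So `p`
is the image of some `x`, and `s = ‖f‖ ^ (-1 / 2)` shows that `T f y = 0` whenever `f x = 0`.
-/

open Function Set

section Continuity

theorem continuous_comp_floor_mul {c : ℤ → ℝ} {φ : ℝ → ℝ} (hφ : Continuous φ)
    (hφ_int : ∀ n : ℤ, φ n = 0) : Continuous fun s ↦ c ⌊s⌋ * φ s := by
  refine continuous_iff_continuousAt.2 fun s ↦ continuousAt_iff_continuous_left'_right'.2 ⟨?_, ?_⟩
  · have h_value : c ⌊s⌋ * φ s = c (⌈s⌉ - 1) * φ s := by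
      rcases eq_or_ne (φ s) 0 with h | h
      · simp only [h, mul_zero]
      · have hs : s ∉ range ((↑) : ℤ → ℝ) := by
          rintro ⟨n, rfl⟩
          exact h (hφ_int n)
        rw [(Int.ceil_eq_floor_add_one_iff_notMem s).2 hs, add_sub_cancel_right]
    rw [ContinuousWithinAt, h_value]
    exact (tendsto_pure_nhds c _ |>.comp (tendsto_floor_left_pure_ceil_sub_one s)).mul
      hφ.continuousWithinAt
  · exact (tendsto_pure_nhds c _ |>.comp ((tendsto_floor_right_pure_floor s).mono_left
      (nhdsWithin_mono s Ioi_subset_Ici_self))).mul hφ.continuousWithinAt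

variable {X E : Type*} [TopologicalSpace X] [NormedAddCommGroup E]

theorem continuousOn_inv_sqrt_norm (f : C(X, E)) :
    ContinuousOn (fun x ↦ (√‖f x‖)⁻¹) (support f) :=
  ContinuousOn.inv₀ (by fun_prop) fun _ hx ↦ (Real.sqrt_pos.2 (norm_pos_iff.2 hx)).ne'

variable [NormedSpace ℝ E]

theorem continuous_smul_of_norm_le {a b : X → ℝ} {f : C(X, E)} (ha : ContinuousOn a (support f))
    (hb : Continuous b) (hab : ∀ x, ‖a x • f x‖ ≤ b x) (hb_zero : ∀ x, f x = 0 → b x = 0) :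
    Continuous fun x ↦ a x • f x := by
  refine continuous_iff_continuousAt.2 fun x ↦ ?_
  by_cases hx : f x = 0
  · rw [ContinuousAt, hx, smul_zero]
    exact squeeze_zero_norm hab (hb_zero x hx ▸ hb.tendsto x)
  · have h_nhds : support f ∈ 𝓝 x := f.continuous.isOpen_support.mem_nhds hx
    exact (ha.continuousAt h_nhds).smul f.continuous.continuousAt

theorem continuous_inv_sqrt_norm_smul (f : C(X, E)) :
    Continuous fun x ↦ (√‖f x‖)⁻¹ • f x := by
  refine continuous_smul_of_norm_le (b := fun x ↦ √‖f x‖) (continuousOn_inv_sqrt_norm f)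
    (by fun_prop) (fun x ↦ ?_) fun x hx ↦ by simp only [hx, norm_zero, Real.sqrt_zero]
  rw [norm_smul, norm_inv, Real.norm_of_nonneg (Real.sqrt_nonneg _), ← div_eq_inv_mul,
    Real.div_sqrt]

theorem continuous_floor_mul_sin_sq_smul {f : C(X, E)} {s : X → ℝ}
    (hs : ContinuousOn s (support f)) (hsf : Continuous fun x ↦ s x • f x) {c : ℤ → ℝ}
    (hc : ∀ n, |c n| ≤ 1 + |(n : ℝ)|) :
    Continuous fun x ↦ (c ⌊s x⌋ * Real.sin (Real.pi * s x) ^ 2) • f x := by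
  have h_wave : Continuous fun t : ℝ ↦ c ⌊t⌋ * Real.sin (Real.pi * t) ^ 2 :=
    continuous_comp_floor_mul (by fun_prop) fun n ↦ by
      rw [mul_comm, Real.sin_int_mul_pi, zero_pow two_ne_zero]
  have h_bound (t : ℝ) : |c ⌊t⌋ * Real.sin (Real.pi * t) ^ 2| ≤ 2 + |t| := by
    have h_floor : |(⌊t⌋ : ℝ)| ≤ 1 + |t| := by
      rw [abs_le]
      constructor <;>
        linarith [Int.floor_le t, Int.lt_floor_add_one t, le_abs_self t, neg_abs_le t]
    calc |c ⌊t⌋ * Real.sin (Real.pi * t) ^ 2|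
        = |c ⌊t⌋| * Real.sin (Real.pi * t) ^ 2 := by rw [abs_mul, abs_sq]
      _ ≤ |c ⌊t⌋| := mul_le_of_le_one_right (abs_nonneg _) (Real.sin_sq_le_one _)
      _ ≤ 2 + |t| := by linarith [hc ⌊t⌋]
  refine continuous_smul_of_norm_le (b := fun x ↦ 2 * ‖f x‖ + ‖s x • f x‖)
    (h_wave.comp_continuousOn hs) (by fun_prop) (fun x ↦ ?_)
    fun x hx ↦ by simp only [hx, smul_zero, norm_zero, mul_zero, add_zero]
  rw [norm_smul, norm_smul, ← add_mul]
  exact mul_le_mul_of_nonneg_right (h_bound (s x)) (norm_nonneg _)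

theorem exists_continuousMap_ne_zero_support_subset [CompletelyRegularSpace X] [Nontrivial E]
    {x : X} {U : Set X} (hU : U ∈ 𝓝 x) : ∃ f : C(X, E), f x ≠ 0 ∧ support f ⊆ U := by
  obtain ⟨V, hVU, hV, hxV⟩ := mem_nhds_iff.1 hU
  obtain ⟨v, hv⟩ := exists_ne (0 : E)
  obtain ⟨φ, hφ, hφx, hφV⟩ := CompletelyRegularSpace.completely_regular_isOpen x V hV hxV
  refine ⟨⟨fun z ↦ (1 - (φ z : ℝ)) • v, by fun_prop⟩, by simp [hφx, hv], fun z hz ↦ ?_⟩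
  by_contra hzU
  exact hz (by simp [hφV fun hzV ↦ hzU (hVU hzV)])

end Continuity

section Realcompact

variable {X : Type} [TopologicalSpace X]

theorem Realcompact.t35Space (hX : Realcompact X) : T35Space X :=
  let ⟨_, _, he⟩ := hX
  he.isEmbedding.t35Space

theorem tendsto_abs_atTop_of_tendsto_coe_nhds {α : Type*} {s : α → ℝ} {l : Filter α} {q : EReal}
    (hs : Tendsto (fun x ↦ (s x : EReal)) l (𝓝 q)) (hq : q = ⊤ ∨ q = ⊥) :
    Tendsto (fun x ↦ |s x|) l atTop := by
  rcases hq with rfl | rfl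
  · exact tendsto_abs_atTop_atTop.comp (EReal.tendsto_coe_nhds_top_iff.1 hs)
  · exact tendsto_abs_atBot_atTop.comp (EReal.tendsto_coe_nhds_bot_iff.1 hs)

theorem exists_le_nhds_of_tendsto_of_isClosedEmbedding {W Z : Type*} [TopologicalSpace W]
    [TopologicalSpace Z] {e : W → Z} (he : IsClosedEmbedding e) {l : Filter W} [l.NeBot] {z : Z}
    (hl : Tendsto e l (𝓝 z)) : ∃ w, l ≤ 𝓝 w := by
  obtain ⟨w, rfl⟩ := he.isClosed_range.mem_of_tendsto hl (.of_forall mem_range_self)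
  exact ⟨w, he.isInducing.tendsto_nhds_iff.2 hl⟩

theorem Realcompact.exists_comap_nhds_le_or_tendsto_atTop (hX : Realcompact X) :
    ∃ (ι : Type) (φ : C(X, ι → EReal)), ∀ p, (comap φ (𝓝 p)).NeBot →
      (∃ x, comap φ (𝓝 p) ≤ 𝓝 x) ∨ ∃ s : C(X, ℝ), Tendsto s (comap φ (𝓝 p)) atTop := by
  obtain ⟨ι, e, he⟩ := hX
  have he_cont (i : ι) : Continuous fun x ↦ e x i := (continuous_apply i).comp he.continuous
  refine ⟨ι, ⟨fun x i ↦ e x i, continuous_pi fun i ↦ continuous_coe_real_ereal.comp (he_cont i)⟩,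
    fun p hp ↦ ?_⟩
  have hp_tendsto (i : ι) : Tendsto (fun x ↦ (e x i : EReal))
      (comap (fun x i ↦ (e x i : EReal)) (𝓝 p)) (𝓝 (p i)) :=
    tendsto_pi_nhds.1 (tendsto_comap (f := fun x i ↦ (e x i : EReal))) i
  by_cases h_inf : ∃ i, p i = ⊤ ∨ p i = ⊥
  · obtain ⟨i, hi⟩ := h_inf
    exact .inr ⟨⟨fun x ↦ |e x i|, (he_cont i).abs⟩,
      tendsto_abs_atTop_of_tendsto_coe_nhds (hp_tendsto i) hi⟩
  · push Not at h_inf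
    lift p to ι → ℝ using h_inf
    exact .inl (exists_le_nhds_of_tendsto_of_isClosedEmbedding he (z := p)
      (tendsto_pi_nhds.2 fun i ↦ EReal.tendsto_coe.1 (hp_tendsto i)))

end Realcompact

section SupportedAlong

/-- The values at `y` of the functions `T f` depend, for additive `T`, only on the germ of `f` along
the filter `l`. For `l = 𝓝 x` this says that `x` is a support point of `T` at `y`, and for
`l = pure x` that `T f y` only depends on `f x`. -/
def SupportedAlong {X Y E F : Type*} [TopologicalSpace X] [TopologicalSpace Y]
    [TopologicalSpace E] [Zero E] [TopologicalSpace F] [Zero F] (T : C(X, E) → C(Y, F)) (y : Y)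
    (l : Filter X) : Prop :=
  ∀ f : C(X, E), f =ᶠ[l] 0 → T f y = 0

variable {X Y E F : Type*} [TopologicalSpace X] [TopologicalSpace Y]
    [NormedAddCommGroup E] [NormedAddCommGroup F]

theorem SupportedAlong.mono {T : C(X, E) → C(Y, F)} {y : Y} {l l' : Filter X}
    (hl : SupportedAlong T y l) (h : l ≤ l') : SupportedAlong T y l' :=
  fun f hf ↦ hl f (h hf)

theorem SupportedAlong.neBot {T : C(X, E) → C(Y, F)} {y : Y} {l : Filter X}
    (hl : SupportedAlong T y l) {f : C(X, E)} (hf : T f y ≠ 0) : l.NeBot :=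
  ⟨fun h_bot ↦ hf (hl f (by rw [h_bot]; exact eventually_bot))⟩

theorem SupportedAlong.apply_eq_of_eventuallyEq {T : C(X, E) →+ C(Y, F)} {y : Y} {l : Filter X}
    (hT : SupportedAlong T y l) {f g : C(X, E)} (hfg : f =ᶠ[l] g) : T f y = T g y := by
  have h_sub := hT (f - g) (hfg.mono fun x hx ↦ sub_eq_zero.2 hx)
  rwa [map_sub, ContinuousMap.sub_apply, sub_eq_zero] at h_sub

theorem exists_linearEquiv_apply_eq {R : Type*} [Semiring R] [Module R E] [ContinuousConstSMul R E]
    [Module R F] [ContinuousConstSMul R F] {T : C(X, E) ≃ₗ[R] C(Y, F)} {x : X} {y : Y}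
    (hT : SupportedAlong T y (pure x)) (hT' : SupportedAlong T.symm x (pure y)) :
    ∃ J : E ≃ₗ[R] F, ∀ f, T f y = J (f x) := by
  let J : E →ₗ[R] F :=
    { toFun v := T (.const X v) y
      map_add' v w := by rw [← ContinuousMap.add_apply, ← map_add]; rfl
      map_smul' c v := by rw [RingHom.id_apply, ← ContinuousMap.smul_apply, ← map_smul]; rfl }
  have hJ (f : C(X, E)) : T f y = J (f x) :=
    hT.apply_eq_of_eventuallyEq (T := T.toAddEquiv.toAddMonoidHom) (eventually_pure.2 rfl)
  refine ⟨.ofBijective J ⟨(injective_iff_map_eq_zero J).2 fun v hv ↦ ?_, fun w ↦ ?_⟩, hJ⟩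
  · simpa using hT' (T (.const X v)) hv
  · exact ⟨T.symm (.const Y w) x, by rw [← hJ, T.apply_symm_apply, ContinuousMap.const_apply]⟩

theorem SupportedAlong.eq_of_symm [NormedSpace ℝ F] [T35Space Y] [Nontrivial F]
    {T : C(X, E) ≃ C(Y, F)} {x : X} {y y' : Y} (hy : SupportedAlong T y (pure x))
    (hx : SupportedAlong T.symm x (pure y')) : y' = y := by
  by_contra hne
  obtain ⟨g, hgy, hg⟩ := exists_continuousMap_ne_zero_support_subset (E := F)
    (isOpen_compl_singleton.mem_nhds (Ne.symm hne))
  have hgx : T.symm g x = 0 := hx g (by_contra fun hgy' ↦ hg hgy' rfl)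
  exact hgy (by simpa using hy (T.symm g) hgx)

theorem continuous_of_supportedAlong_pure [NormedSpace ℝ E] [CompletelyRegularSpace X]
    [Nontrivial E] {T : C(X, E) ≃ C(Y, F)} {h : Y → X}
    (hT : ∀ y, SupportedAlong T y (pure (h y)))
    (hT' : ∀ y, SupportedAlong T.symm (h y) (pure y)) : Continuous h := by
  refine continuous_iff_continuousAt.2 fun y U hU ↦ ?_
  obtain ⟨f, hf, hfU⟩ := exists_continuousMap_ne_zero_support_subset (E := E) hU
  have hfy : T f y ≠ 0 := fun h0 ↦ hf (by simpa using hT' y (T f) h0)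
  rw [mem_map]
  filter_upwards [(T f).continuous.isOpen_support.mem_nhds hfy] with z hz
  exact hfU fun h0 ↦ hz (hT z f h0)

end SupportedAlong

section Separating

variable {X Y E F : Type} [TopologicalSpace X] [TopologicalSpace Y]
    [NormedAddCommGroup E] [NormedAddCommGroup F]

theorem SeparatingC.apply_eq_zero_or {T : C(X, E) → C(Y, F)} (hT : SeparatingC T) {f g : C(X, E)}
    (hfg : ∀ x, f x = 0 ∨ g x = 0) (y : Y) : T f y = 0 ∨ T g y = 0 := by
  simpa using hT f g (by simpa using hfg) y

theorem SeparatingC.apply_eq_of_eqOn_support {T : C(X, E) →+ C(Y, F)} (hT : SeparatingC T)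
    {f g k : C(X, E)} (hfg : EqOn f g (support k)) {y : Y} (hy : T k y ≠ 0) : T f y = T g y := by
  have h_disjoint (x : X) : (f - g) x = 0 ∨ k x = 0 :=
    or_iff_not_imp_right.2 fun hx ↦ sub_eq_zero.2 (hfg hx)
  have h_sub := (hT.apply_eq_zero_or h_disjoint y).resolve_right hy
  rwa [map_sub, ContinuousMap.sub_apply, sub_eq_zero] at h_sub

theorem SeparatingC.exists_supportedAlong_comap_nhds [NormedSpace ℝ E] {T : C(X, E) →+ C(Y, F)}
    (hT : SeparatingC T) {K : Type*} [TopologicalSpace K] [CompactSpace K] [T2Space K] [Nonempty K]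
    (φ : C(X, K)) (y : Y) : ∃ p, SupportedAlong T y (comap φ (𝓝 p)) := by
  by_contra h
  have h_witness (p : K) : ∃ U, IsOpen U ∧ p ∈ U ∧ ∃ g : C(X, E),
      (∀ x, φ x ∈ U → g x = 0) ∧ T g y ≠ 0 := by
    simp only [SupportedAlong, not_exists, not_forall] at h
    obtain ⟨g, hg, hgy⟩ := h p
    obtain ⟨U, ⟨hpU, hU⟩, hUg⟩ := ((nhds_basis_opens p).comap φ).mem_iff.1 hg
    exact ⟨U, hU, hpU, g, fun x hx ↦ hUg hx, hgy⟩
  choose U hU hpU g hg hgy using h_witness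
  obtain ⟨A, hA⟩ := isCompact_univ.elim_finite_subcover U hU fun p _ ↦ mem_iUnion.2 ⟨p, hpU p⟩
  obtain ⟨ρ, hρ⟩ := PartitionOfUnity.exists_isSubordinate_of_locallyFinite isClosed_univ
    (fun p : A ↦ U p) (fun p ↦ hU p) (locallyFinite_of_finite _)
    (by rwa [iUnion_subtype])
  have h_piece (f : C(X, E)) (p : A) : T (((ρ p).comp φ) • f) y = 0 := by
    refine (hT.apply_eq_zero_or (g := g p) (fun x ↦ ?_) y).resolve_right (hgy p)
    by_cases hx : φ x ∈ U p
    · exact .inr (hg p x hx)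
    · have hρx : ρ p (φ x) = 0 := by_contra fun h0 ↦ hx (hρ p (subset_tsupport _ h0))
      simp [ContinuousMap.smul_apply', hρx]
  have h_sum (f : C(X, E)) : ∑ p : A, ((ρ p).comp φ) • f = f := by
    ext x
    have h_one := ρ.sum_eq_one (mem_univ (φ x))
    rw [finsum_eq_sum_of_fintype] at h_one
    simp only [ContinuousMap.sum_apply, ContinuousMap.smul_apply', ContinuousMap.comp_apply,
      ← Finset.sum_smul, h_one, one_smul]
  obtain ⟨p⟩ := ‹Nonempty K›
  apply hgy p
  rw [← h_sum (g p), map_sum, ContinuousMap.sum_apply]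
  exact Finset.sum_eq_zero fun q _ ↦ h_piece (g p) q

variable [NormedSpace ℝ F] [CompletelyRegularSpace Y] [Nontrivial F]

theorem SeparatingC.support_apply_subset_closure {T : C(X, E) ≃ C(Y, F)} (hT : SeparatingC T)
    (hT' : SeparatingC T.symm) {ι : Sort*} {f : C(X, E)} {b : ι → C(X, E)}
    (hf : support f ⊆ ⋃ i, support (b i)) :
    support (T f) ⊆ closure (⋃ i, support (T (b i))) := by
  intro y hy
  by_contra hy_closure
  obtain ⟨w, hwy, hw⟩ := exists_continuousMap_ne_zero_support_subset (E := F)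
    (isClosed_closure.isOpen_compl.mem_nhds hy_closure)
  have h_disjoint (i : ι) (x : X) : T.symm w x = 0 ∨ b i x = 0 := by
    have := hT'.apply_eq_zero_or (f := w) (g := T (b i)) (fun z ↦ or_iff_not_imp_left.2 fun hz ↦
      by_contra fun hbz ↦ hw hz (subset_closure (mem_iUnion.2 ⟨i, hbz⟩))) x
    rwa [T.symm_apply_apply] at this
  have h_or := hT.apply_eq_zero_or (f := T.symm w) (g := f) (fun x ↦ or_iff_not_imp_right.2
    fun hx ↦ let ⟨i, hi⟩ := mem_iUnion.1 (hf hx); (h_disjoint i x).resolve_right hi) y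
  rw [T.apply_symm_apply] at h_or
  exact h_or.elim hwy hy

theorem SeparatingC.apply_eq_zero_of_eqOn_zsmul {T : C(X, E) ≃+ C(Y, F)} (hT : SeparatingC T)
    (hT' : SeparatingC T.symm) {f g : C(X, E)} {b : ℤ → C(X, E)}
    (hf : ∀ n, EqOn f (b n) (support (b n))) (hg : ∀ n, EqOn g (n • b n) (support (b n))) {y : Y}
    (h_tail : ∀ N : ℤ, ∃ t : C(X, E), T t y = T f y ∧ support t ⊆ ⋃ n : Ici N, support (b n)) :
    T f y = 0 := by
  by_contra hy
  have h_half : 0 < ‖T f y‖ / 2 := half_pos (norm_pos_iff.2 hy)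
  obtain ⟨N, hN⟩ := exists_nat_gt ((‖T g y‖ + 1) / (‖T f y‖ / 2))
  rw [div_lt_iff₀ h_half] at hN
  obtain ⟨t, hty, ht⟩ := h_tail N
  have hy_closure : y ∈ closure (⋃ n : Ici (N : ℤ), support (T (b n))) :=
    hT.support_apply_subset_closure (T := T.toEquiv) hT' ht (mem_support.2 (hty ▸ hy))
  have h_nhds : ∀ᶠ z in 𝓝 y, ‖T f y‖ / 2 < ‖T f z‖ ∧ ‖T g z‖ < ‖T g y‖ + 1 :=
    ((T f).continuous.norm.tendsto y |>.eventually_const_lt (half_lt_self (norm_pos_iff.2 hy))).and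
      ((T g).continuous.norm.tendsto y |>.eventually_lt_const (lt_add_one _))
  obtain ⟨z, ⟨hfz, hgz⟩, hz⟩ := mem_closure_iff_nhds.1 hy_closure _ h_nhds
  obtain ⟨⟨n, hn⟩, hbz⟩ := mem_iUnion.1 hz
  have hfz_eq : T f z = T (b n) z :=
    hT.apply_eq_of_eqOn_support (T := T.toAddMonoidHom) (hf n) hbz
  have hgz_eq : T g z = n • T f z := by
    rw [hfz_eq, ← ContinuousMap.zsmul_apply, ← map_zsmul]
    exact hT.apply_eq_of_eqOn_support (T := T.toAddMonoidHom) (hg n) hbz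
  have hNn : (N : ℝ) ≤ ‖(n : ℝ)‖ := (Int.cast_le.2 hn).trans (le_abs_self _)
  refine lt_irrefl (‖T g y‖ + 1) ?_
  calc ‖T g y‖ + 1 < N * (‖T f y‖ / 2) := hN
    _ ≤ ‖(n : ℝ)‖ * ‖T f z‖ := by gcongr
    _ = ‖T g z‖ := by rw [hgz_eq, norm_zsmul ℝ]
    _ < ‖T g y‖ + 1 := hgz

variable [NormedSpace ℝ E]

theorem SupportedAlong.apply_sin_sq_smul_eq_zero {T : C(X, E) ≃+ C(Y, F)} (hT : SeparatingC T)
    (hT' : SeparatingC T.symm) {y : Y} {l : Filter X} (hl : SupportedAlong T y l) {f f₁ : C(X, E)}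
    {s : X → ℝ} (hs : ContinuousOn s (support f)) (hsf : Continuous fun x ↦ s x • f x)
    (hs_lim : Tendsto s (l ⊓ 𝓟 (support f)) atTop)
    (hf₁ : ∀ x, f₁ x = Real.sin (Real.pi * s x) ^ 2 • f x) : T f₁ y = 0 := by
  have h_exists (c : ℤ → ℝ) (hc : ∀ n, |c n| ≤ 1 + |(n : ℝ)|) :
      ∃ g : C(X, E), ∀ x, g x = c ⌊s x⌋ • f₁ x :=
    ⟨⟨_, continuous_floor_mul_sin_sq_smul hs hsf hc⟩, fun x ↦ by
      rw [ContinuousMap.coe_mk, hf₁, smul_smul]⟩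
  have h_indicator (A : Set ℤ) (n : ℤ) : |A.indicator (1 : ℤ → ℝ) n| ≤ 1 + |(n : ℝ)| := by
    by_cases hn : n ∈ A <;> simp [hn, add_nonneg]
  choose b hb using fun n : ℤ ↦ h_exists _ (h_indicator {n})
  choose t ht using fun N : ℤ ↦ h_exists _ (h_indicator (Ici N))
  obtain ⟨g, hg⟩ := h_exists (fun n ↦ n) fun n ↦ by linarith
  have h_floor {n : ℤ} {x : X} (hx : x ∈ support (b n)) : ⌊s x⌋ = n := by
    by_contra hne
    exact hx (by simp [hb, hne])
  refine SeparatingC.apply_eq_zero_of_eqOn_zsmul hT hT' (g := g) (b := b) (fun n x hx ↦ ?_)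
    (fun n x hx ↦ ?_) fun N ↦ ⟨t N, ?_, fun x hx ↦ ?_⟩
  · simp [hb, h_floor hx]
  · simp [hb, hg, h_floor hx, Int.cast_smul_eq_zsmul]
  · refine hl.apply_eq_of_eventuallyEq (T := T.toAddMonoidHom) ?_
    have h_large : ∀ᶠ x in l, x ∈ support f → (N : ℝ) ≤ s x :=
      eventually_inf_principal.1 (hs_lim.eventually_ge_atTop (N : ℝ))
    filter_upwards [h_large] with x hx
    by_cases hfx : f x = 0
    · simp [ht, hf₁, hfx]
    · simp [ht, Int.le_floor.2 (hx hfx)]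
  · have hNx : N ≤ ⌊s x⌋ := by
      by_contra hlt
      exact hx (by simp [ht, hlt])
    refine mem_iUnion.2 ⟨⟨⌊s x⌋, hNx⟩, ?_⟩
    simpa [hb, ht, hNx] using hx

theorem SupportedAlong.apply_eq_zero_of_tendsto_atTop {T : C(X, E) ≃+ C(Y, F)} (hT : SeparatingC T)
    (hT' : SeparatingC T.symm) {y : Y} {l : Filter X} (hl : SupportedAlong T y l) {f : C(X, E)}
    {s : X → ℝ} (hs : ContinuousOn s (support f)) (hsf : Continuous fun x ↦ s x • f x)
    (hs_lim : Tendsto s (l ⊓ 𝓟 (support f)) atTop) : T f y = 0 := by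
  have h_sin : Continuous fun x ↦ Real.sin (Real.pi * s x) ^ 2 • f x := by
    simpa using continuous_floor_mul_sin_sq_smul hs hsf (c := 1) (by simp)
  let f₁ : C(X, E) := ⟨_, h_sin⟩
  have hf₁ : T f₁ y = 0 := hl.apply_sin_sq_smul_eq_zero hT hT' hs hsf hs_lim fun _ ↦ rfl
  have hf₂ : T (f - f₁) y = 0 := by
    refine hl.apply_sin_sq_smul_eq_zero hT hT' (s := fun x ↦ s x + 1 / 2)
      (hs.add continuousOn_const) ?_ (tendsto_atTop_add_const_right _ _ hs_lim) fun x ↦ ?_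
    · simp only [add_smul]
      exact hsf.add (f.continuous.const_smul (1 / 2 : ℝ))
    · rw [mul_add, mul_one_div, Real.sin_add_pi_div_two, Real.cos_sq', sub_smul, one_smul]
      rfl
  rw [map_sub, ContinuousMap.sub_apply, hf₁, sub_zero] at hf₂
  exact hf₂

theorem SupportedAlong.pure_of_nhds {T : C(X, E) ≃+ C(Y, F)} (hT : SeparatingC T)
    (hT' : SeparatingC T.symm) {y : Y} {x : X} (hx : SupportedAlong T y (𝓝 x)) :
    SupportedAlong T y (pure x) := by
  intro f hfx
  have h_sqrt : Tendsto (fun z ↦ √‖f z‖) (𝓝[support f] x) (𝓝[>] 0) := by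
    refine tendsto_nhdsWithin_iff.2 ⟨?_, ?_⟩
    · have h_cont : Continuous fun z ↦ √‖f z‖ := by fun_prop
      simpa [show f x = 0 from hfx] using (h_cont.tendsto x).mono_left nhdsWithin_le_nhds
    · filter_upwards [self_mem_nhdsWithin] with z hz
      exact Real.sqrt_pos.2 (norm_pos_iff.2 hz)
  refine hx.apply_eq_zero_of_tendsto_atTop hT hT' (s := fun z ↦ (√‖f z‖)⁻¹)
    (continuousOn_inv_sqrt_norm f) (continuous_inv_sqrt_norm_smul f)
    (tendsto_inv_nhdsGT_zero.comp h_sqrt)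

theorem Realcompact.exists_supportedAlong_pure (hX : Realcompact X) {T : C(X, E) ≃+ C(Y, F)}
    (hT : SeparatingC T) (hT' : SeparatingC T.symm) (y : Y) :
    ∃ x, SupportedAlong T y (pure x) := by
  obtain ⟨ι, φ, hφ⟩ := hX.exists_comap_nhds_le_or_tendsto_atTop
  obtain ⟨p, hp⟩ := SeparatingC.exists_supportedAlong_comap_nhds (T := T.toAddMonoidHom) hT φ y
  obtain ⟨v, hv⟩ := exists_ne (0 : F)
  let f : C(X, E) := T.symm (.const Y v)
  have hf : T f y ≠ 0 := by simpa [f] using hv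
  obtain ⟨x, hx⟩ | ⟨s, hs⟩ := hφ p (hp.neBot hf)
  · exact ⟨x, (hp.mono hx).pure_of_nhds hT hT'⟩
  · exact absurd (hp.apply_eq_zero_of_tendsto_atTop hT hT' s.continuous.continuousOn
      (s.continuous.smul f.continuous) (hs.mono_left inf_le_left)) hf

end Separating

theorem stmt3_general {R : Type*} {X Y E F : Type} [Semiring R]
    [TopologicalSpace X] [TopologicalSpace Y]
    [NormedAddCommGroup E] [NormedSpace ℝ E] [Module R E] [ContinuousConstSMul R E] [Nontrivial E]
    [NormedAddCommGroup F] [NormedSpace ℝ F] [Module R F] [ContinuousConstSMul R F] [Nontrivial F]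
    (hX : Realcompact X) (hY : Realcompact Y) (T : C(X, E) ≃ₗ[R] C(Y, F)) (hT : SeparatingC T)
    (hT' : SeparatingC T.symm) :
    ∃ (h : Y ≃ₜ X) (J : Y → (E ≃ₗ[R] F)),
      ∀ (f : C(X, E)) (y : Y), T f y = J y (f (h y)) := by
  have := hX.t35Space
  have := hY.t35Space
  choose h hh using fun y ↦ show ∃ x, SupportedAlong T y (pure x) from
    hX.exists_supportedAlong_pure (T := T.toAddEquiv) hT hT' y
  choose k hk using fun x ↦ show ∃ y, SupportedAlong T.symm x (pure y) from
    hY.exists_supportedAlong_pure (T := T.toAddEquiv.symm) hT' hT x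
  have hkh (y : Y) : k (h y) = y := (hh y).eq_of_symm (T := T.toEquiv) (hk (h y))
  have hhk (x : X) : h (k x) = x := (hk x).eq_of_symm (T := T.toEquiv.symm) (hh (k x))
  have hk' (y : Y) : SupportedAlong T.symm (h y) (pure y) := by simpa only [hkh] using hk (h y)
  have hh' (x : X) : SupportedAlong T (k x) (pure x) := by simpa only [hhk] using hh (k x)
  choose J hJ using fun y ↦ exists_linearEquiv_apply_eq (hh y) (hk' y)
  exact ⟨⟨⟨h, k, hkh, hhk⟩, continuous_of_supportedAlong_pure (T := T.toEquiv) hh hk',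
    continuous_of_supportedAlong_pure (T := T.toEquiv.symm) hk hh'⟩, J, fun f y ↦ hJ y f⟩

theorem stmt3 {𝕂 X Y E F : Type} [RCLike 𝕂]
    [TopologicalSpace X] [CompletelyRegularSpace X] [T2Space X]
    [TopologicalSpace Y] [CompletelyRegularSpace Y] [T2Space Y]
    [NormedAddCommGroup E] [NormedSpace 𝕂 E] [Nontrivial E]
    [NormedAddCommGroup F] [NormedSpace 𝕂 F] [Nontrivial F]
    (hX : Realcompact X) (hY : Realcompact Y)
    (T : C(X, E) ≃ₗ[𝕂] C(Y, F)) (hT : SeparatingC ⇑T) (hT' : SeparatingC ⇑T.symm) :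
    ∃ (h : Y ≃ₜ X) (J : Y → (E ≃ₗ[𝕂] F)),
      ∀ (f : C(X, E)) (y : Y), T f y = J y (f (h y)) := by
  let _ : NormedSpace ℝ E := .restrictScalars ℝ 𝕂 E
  let _ : NormedSpace ℝ F := .restrictScalars ℝ 𝕂 F
  exact stmt3_general hX hY T hT hT'
end

section
/- Let X and Y be realcompact completely regular Hausdorff topological spaces, let E and F be nonzero normed spaces over 𝕂 with E finite-dimensional, and let T : C(X,E) → C(Y,F) be a 𝕂-linear biseparating map. If C(X,E) and C(Y,F) are endowed with the compact-open topology, then both T and T⁻¹ are continuous. -/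
open Filter Topology

/-!
For `y : Y`, the scalar functions `a` with `T (a • f) y = 0` for all `f` form an ideal `P` of
`C(X, ℝ)` which contains one factor of every product equal to zero. Along the filter generated by
the zero sets of the members of `P`, every continuous map with relatively compact range converges.

The crucial point is that `P` contains every `b` which tends to `0` along this filter. Choose two
continuous functions `d` of a real variable such that near every small `t ≠ 0` one of them is
`s ↦ c * s`, with `c` tending to `∞` as `t → 0`. If `T (b • f) y ≠ 0`, then
`‖T (d ∘ b • f)‖ < N * ‖T (b • f)‖` near `y` for some `N`, so `b` cannot have a nonzero limit along
the filter of any point near `y`. Hence every `φ ∘ b` with `φ = 0` near `0` annihilates `f` once `f`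
is localized near `y`, so `b` itself annihilates this `f`, and `T (b • f) y = 0`.

By realcompactness the filter then converges to a point `h y`, so `T (a • f) y = a (h y) • T f y`.
As `E` is finite-dimensional, `T f` is a finite sum of functions `(ℓ ∘ f ∘ h) • g` with `ℓ` in the
dual of `E` and `g` fixed, an expression continuous in `f`. Evaluating at one point shows that
`F` is finite-dimensional as well, so the same applies to the inverse of `T`.
-/

section Staircase

/-- A continuous staircase: within distance `1` of the identity, and constant on each interval
`[n + 1 / 3, n + 1]`. -/
noncomputable def stair (s : ℝ) : ℝ := ⌊s⌋ + min 1 (3 * Int.fract s)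

theorem stair_sub_self (s : ℝ) : stair s - s = min 1 (3 * Int.fract s) - Int.fract s := by
  rw [stair, ← Int.self_sub_floor]
  ring

theorem abs_stair_sub_self_le (s : ℝ) : |stair s - s| ≤ 1 := by
  have h0 := Int.fract_nonneg s
  have h1 := Int.fract_lt_one s
  rw [stair_sub_self, abs_le]
  grind

theorem continuous_stair : Continuous stair := by
  have h : Continuous ((fun u : ℝ => min 1 (3 * u) - u) ∘ Int.fract) :=
    ContinuousOn.comp_fract'' (by fun_prop) (by norm_num)
  refine (continuous_id.add h).congr fun s => ?_
  change s + (min 1 (3 * Int.fract s) - Int.fract s) = stair s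
  rw [← stair_sub_self, add_sub_cancel]

theorem stair_eventuallyEq_const {s : ℝ} (hs : 1 / 3 < Int.fract s) :
    stair =ᶠ[𝓝 s] fun _ => stair s := by
  have stair_eq : ∀ u ∈ Set.Ioo (⌊s⌋ + 1 / 3 : ℝ) (⌊s⌋ + 1), stair u = ⌊s⌋ + 1 := by
    rintro u ⟨hu₁, hu₂⟩
    have hfloor : ⌊u⌋ = ⌊s⌋ := Int.floor_eq_iff.2 ⟨by linarith, hu₂⟩
    rw [stair, ← Int.self_sub_floor, hfloor, min_eq_left (by linarith)]
  have hs_mem : s ∈ Set.Ioo (⌊s⌋ + 1 / 3 : ℝ) (⌊s⌋ + 1) :=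
    ⟨by linarith [Int.floor_add_fract s], Int.lt_floor_add_one s⟩
  filter_upwards [Ioo_mem_nhds hs_mem.1 hs_mem.2] with u hu
  rw [stair_eq u hu, stair_eq s hs_mem]

theorem one_third_lt_fract_or (s : ℝ) :
    1 / 3 < Int.fract s ∨ 1 / 3 < Int.fract (1 / 2 + s) := by
  refine or_iff_not_imp_left.2 fun h => ?_
  have hfract : Int.fract (1 / 2 + s) = 1 / 2 + Int.fract s :=
    Int.fract_eq_iff.2 ⟨by linarith [Int.fract_nonneg s], by linarith,
      ⌊s⌋, by linarith [Int.floor_add_fract s]⟩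
  linarith [Int.fract_nonneg s]

theorem continuous_mul_stair_log (k : ℝ) :
    Continuous fun t : ℝ => t * stair (k - Real.log t) := by
  have hbounded : Continuous fun t : ℝ =>
      t * (stair (k - Real.log t) - (k - Real.log t)) := by
    refine continuous_iff_continuousAt.2 fun t => ?_
    rcases eq_or_ne t 0 with rfl | ht
    · rw [ContinuousAt, zero_mul]
      refine squeeze_zero_norm (fun u => ?_) (tendsto_norm_zero (E := ℝ))
      rw [norm_mul]
      exact mul_le_of_le_one_right (norm_nonneg _) (abs_stair_sub_self_le _)
    · have hlog : ContinuousAt (fun u => k - Real.log u) t :=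
        continuousAt_const.sub (Real.continuousAt_log ht)
      exact continuousAt_id.mul ((continuous_stair.continuousAt.comp hlog).sub hlog)
  refine (((continuous_mul_const k).sub Real.continuous_mul_log).add hbounded).congr fun t => ?_
  change t * k - t * Real.log t + t * (stair (k - Real.log t) - (k - Real.log t)) = _
  ring

theorem exists_locally_linear_steep :
    ∃ d : Bool → C(ℝ, ℝ), ∀ N : ℝ, ∀ᶠ t in 𝓝[≠] (0 : ℝ),
      ∃ i, ∃ c ≥ N, d i =ᶠ[𝓝 t] fun s => c * s := by
  let shift : Bool → ℝ := fun i => cond i (1 / 2) 0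
  refine ⟨fun i => ⟨_, continuous_mul_stair_log (shift i)⟩, fun N => ?_⟩
  filter_upwards [Real.tendsto_log_nhdsNE_zero.eventually_le_atBot (-(N + 1)),
    self_mem_nhdsWithin] with t hlog ht
  obtain ⟨i, hi, hshift⟩ :
      ∃ i, 1 / 3 < Int.fract (shift i - Real.log t) ∧ 0 ≤ shift i := by
    rcases one_third_lt_fract_or (-Real.log t) with h | h
    · exact ⟨false, by simpa only [shift, cond_false, zero_sub] using h, le_rfl⟩
    · exact ⟨true, by simpa only [shift, cond_true, sub_eq_add_neg] using h, by norm_num [shift]⟩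
  refine ⟨i, stair (shift i - Real.log t), ?_, ?_⟩
  · linarith [(abs_le.1 (abs_stair_sub_self_le (shift i - Real.log t))).1]
  · have hcont : ContinuousAt (fun u => shift i - Real.log u) t :=
      continuousAt_const.sub (Real.continuousAt_log ht)
    filter_upwards [hcont.eventually (stair_eventuallyEq_const hi)] with s hs
    exact (congrArg (s * ·) hs).trans (mul_comm _ _)

end Staircase

theorem exists_eventuallyEq_one_eventuallyEq_zero {Z : Type*} [TopologicalSpace Z]
    [CompletelyRegularSpace Z] {t : Z} {U : Set Z} (hU : U ∈ 𝓝 t) :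
    ∃ w : C(Z, ℝ), w =ᶠ[𝓝 t] 1 ∧ ∀ z ∉ U, w =ᶠ[𝓝 z] 0 := by
  obtain ⟨f, hf, hft, hfU⟩ := CompletelyRegularSpace.completely_regular_isOpen t (interior U)
    isOpen_interior (mem_interior_iff_mem_nhds.2 hU)
  have hf' : Continuous fun z => (f z : ℝ) := continuous_subtype_val.comp hf
  refine ⟨⟨fun z => max 0 (min 1 (2 - 3 * f z)), by fun_prop⟩, ?_, fun z hz => ?_⟩
  · have hlt : (f t : ℝ) < 1 / 3 := by simp [hft]
    filter_upwards [hf'.continuousAt.eventually_lt_const hlt] with z hz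
    change max 0 (min 1 (2 - 3 * (f z : ℝ))) = 1
    grind
  · have hlt : 2 / 3 < (f z : ℝ) := by
      rw [hfU fun hz' => hz (interior_subset hz')]
      norm_num
    filter_upwards [hf'.continuousAt.eventually_const_lt hlt] with z' hz'
    change max 0 (min 1 (2 - 3 * (f z' : ℝ))) = 0
    grind

theorem exists_eventuallyEq_id_mem_closedBall {ε : ℝ} (hε : 0 < ε) :
    ∃ φ : C(ℝ, ℝ), φ =ᶠ[𝓝 0] id ∧ ∀ s, φ s ∈ Metric.closedBall (0 : ℝ) ε := by
  refine ⟨⟨fun s => max (-ε) (min ε s), by fun_prop⟩, ?_, fun s => ?_⟩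
  · filter_upwards [Ioo_mem_nhds (neg_lt_zero.2 hε) hε] with s hs
    exact (congrArg (max (-ε)) (min_eq_right hs.2.le)).trans (max_eq_right hs.1.le)
  · rw [mem_closedBall_zero_iff, Real.norm_eq_abs]
    exact abs_le.2 ⟨le_max_left _ _, max_le (by linarith) (min_le_left _ _)⟩

/-- Proper ideals containing a factor of every product equal to zero (the pseudoprime ideals of
Gillman and Kohls). -/
structure IsPseudoprime {R : Type*} [CommSemiring R] (P : Ideal R) : Prop where
  ne_top : P ≠ ⊤
  mem_or_mem_of_mul_eq_zero : ∀ {a b : R}, a * b = 0 → a ∈ P ∨ b ∈ P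

section ZeroFilter

variable {X Z : Type*} [TopologicalSpace X] [TopologicalSpace Z] {P : Ideal C(X, ℝ)}

/-- The filter generated by the zero sets of the members of an ideal of `C(X, ℝ)`. -/
def zeroFilter (P : Ideal C(X, ℝ)) : Filter X where
  sets := {s | ∃ a ∈ P, ∀ x, a x = 0 → x ∈ s}
  univ_sets := ⟨0, P.zero_mem, fun _ _ => Set.mem_univ _⟩
  sets_of_superset := fun ⟨a, ha, has⟩ hst => ⟨a, ha, fun x hx => hst (has x hx)⟩
  inter_sets := by
    rintro s t ⟨a, ha, has⟩ ⟨b, hb, hbt⟩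
    refine ⟨a * a + b * b, P.add_mem (P.mul_mem_left a ha) (P.mul_mem_left b hb), fun x hx => ?_⟩
    obtain ⟨hax, hbx⟩ := mul_self_add_mul_self_eq_zero.1 hx
    exact ⟨has x hax, hbt x hbx⟩

theorem eventually_zeroFilter_eq_zero {a : C(X, ℝ)} (ha : a ∈ P) :
    ∀ᶠ x in zeroFilter P, a x = 0 :=
  ⟨a, ha, fun _ hx => hx⟩

theorem zeroFilter_neBot (hP : P ≠ ⊤) : (zeroFilter P).NeBot := by
  refine ⟨fun hbot => hP ?_⟩
  obtain ⟨a, ha, hne⟩ := Filter.empty_mem_iff_bot.2 hbot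
  exact P.eq_top_of_isUnit_mem ha ((ContinuousMap.isUnit_iff_forall_ne_zero a).2 hne)

namespace IsPseudoprime

variable (hP : IsPseudoprime P)

include hP

section CompletelyRegularSpace

variable [CompletelyRegularSpace Z] {a : C(X, Z)} {t : Z}

theorem comp_mem_of_eventuallyEq_zero (ht : MapClusterPt t (zeroFilter P) a) {φ : C(Z, ℝ)}
    (hφ : φ =ᶠ[𝓝 t] 0) : φ.comp a ∈ P := by
  obtain ⟨ψ, hψ_one, hψ_zero⟩ := exists_eventuallyEq_one_eventuallyEq_zero hφ
  have hmul : φ.comp a * ψ.comp a = 0 := by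
    ext x
    by_cases hx : φ (a x) = 0
    · exact mul_eq_zero_of_left hx _
    · exact mul_eq_zero_of_right _ (hψ_zero (a x) hx).self_of_nhds
  refine (hP.mem_or_mem_of_mul_eq_zero hmul).resolve_right fun hψ => ?_
  obtain ⟨x, hx_one, hx_zero⟩ :=
    ((ht.frequently hψ_one).and_eventually (eventually_zeroFilter_eq_zero hψ)).exists
  exact one_ne_zero (hx_one.symm.trans hx_zero)

theorem tendsto_of_mapClusterPt (ht : MapClusterPt t (zeroFilter P) a) :
    Tendsto a (zeroFilter P) (𝓝 t) := by
  intro U hU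
  obtain ⟨w, hw_one, hw_zero⟩ := exists_eventuallyEq_one_eventuallyEq_zero hU
  have hmem : (1 - w).comp a ∈ P :=
    hP.comp_mem_of_eventuallyEq_zero ht (hw_one.mono fun z hz => sub_eq_zero.2 hz.symm)
  change ∀ᶠ x in zeroFilter P, a x ∈ U
  filter_upwards [eventually_zeroFilter_eq_zero hmem] with x hx
  by_contra hxU
  have hwx : 1 = w (a x) := sub_eq_zero.1 hx
  exact one_ne_zero (hwx.trans (hw_zero (a x) hxU).self_of_nhds)

theorem exists_tendsto_of_isCompact {K : Set Z} (hK : IsCompact K)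
    (ha : ∀ᶠ x in zeroFilter P, a x ∈ K) : ∃ t ∈ K, Tendsto a (zeroFilter P) (𝓝 t) := by
  have := zeroFilter_neBot hP.ne_top
  obtain ⟨t, htK, ht⟩ := hK.exists_mapClusterPt_of_frequently ha.frequently
  exact ⟨t, htK, hP.tendsto_of_mapClusterPt ht⟩

end CompletelyRegularSpace

theorem exists_tendsto
    (hzero : ∀ b : C(X, ℝ), Tendsto b (zeroFilter P) (𝓝 0) → b ∈ P) (a : C(X, ℝ)) :
    ∃ t, Tendsto a (zeroFilter P) (𝓝 t) := by
  have hpos : ∀ x, 0 < 1 + a x ^ 2 := fun x => by positivity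
  let b : C(X, ℝ) := ⟨fun x => (1 + a x ^ 2)⁻¹,
    Continuous.inv₀ (by fun_prop) fun x => (hpos x).ne'⟩
  have hb_mem : ∀ x, b x ∈ Set.Icc 0 1 := fun x =>
    ⟨(inv_pos.2 (hpos x)).le, inv_le_one_of_one_le₀ (by linarith [sq_nonneg (a x)])⟩
  obtain ⟨t, ⟨ht_nonneg, -⟩, ht⟩ :=
    hP.exists_tendsto_of_isCompact isCompact_Icc (Eventually.of_forall hb_mem)
  have ht_ne : t ≠ 0 := by
    rintro rfl
    exact hP.ne_top <| P.eq_top_of_isUnit_mem (hzero b ht) <|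
      (ContinuousMap.isUnit_iff_forall_ne_zero b).2 fun x => (inv_pos.2 (hpos x)).ne'
  have ha_bdd : ∀ᶠ x in zeroFilter P, a x ∈ Set.Icc (-(2 / t)) (2 / t) := by
    have ht_half : t / 2 < t := half_lt_self (ht_nonneg.lt_of_ne' ht_ne)
    filter_upwards [ht.eventually_const_lt ht_half] with x hx
    have hlt : 1 + a x ^ 2 < 2 / t := by
      rw [← inv_div]
      exact (lt_inv_comm₀ (by positivity) (hpos x)).1 hx
    constructor <;> nlinarith
  obtain ⟨s, -, hs⟩ := hP.exists_tendsto_of_isCompact isCompact_Icc ha_bdd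
  exact ⟨s, hs⟩

end IsPseudoprime

end ZeroFilter

namespace Realcompact

variable {X Y : Type} [TopologicalSpace X] [TopologicalSpace Y] (hX : Realcompact X)

include hX

theorem exists_le_nhds {l : Filter X} [l.NeBot]
    (hl : ∀ a : C(X, ℝ), ∃ t, Tendsto a l (𝓝 t)) : ∃ x, l ≤ 𝓝 x := by
  obtain ⟨ι, e, he⟩ := hX
  choose p hp using fun i => hl ⟨fun x => e x i, (continuous_apply i).comp he.continuous⟩
  have hep : Tendsto e l (𝓝 p) := tendsto_pi_nhds.2 hp
  obtain ⟨x, rfl⟩ := he.isClosed_range.mem_of_tendsto hep (Eventually.of_forall Set.mem_range_self)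
  exact ⟨x, he.isInducing.tendsto_nhds_iff.2 hep⟩

theorem continuous_of_forall_comp {h : Y → X} (hh : ∀ a : C(X, ℝ), Continuous (a ∘ h)) :
    Continuous h := by
  obtain ⟨ι, e, he⟩ := hX
  refine he.isInducing.continuous_iff.2 (continuous_pi fun i => ?_)
  exact hh ⟨fun x => e x i, (continuous_apply i).comp he.continuous⟩

end Realcompact

theorem smul_eq_zero_of_forall_comp_smul_eq_zero {X E : Type*} [TopologicalSpace X]
    [NormedAddCommGroup E] [NormedSpace ℝ E] {b : C(X, ℝ)} {g : C(X, E)}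
    (h : ∀ φ : C(ℝ, ℝ), φ =ᶠ[𝓝 0] 0 → φ.comp b • g = 0) : b • g = 0 := by
  ext x
  rcases eq_or_ne (b x) 0 with hbx | hbx
  · exact smul_eq_zero_of_left hbx _
  · obtain ⟨w, hw_one, hw_zero⟩ :=
      exists_eventuallyEq_one_eventuallyEq_zero (isOpen_ne.mem_nhds hbx.symm)
    have hgx : (1 - w (b x)) • g x = 0 := DFunLike.congr_fun
      (h (1 - w) (hw_one.mono fun s hs => sub_eq_zero.2 hs.symm)) x
    have hwx : w (b x) = 0 := (hw_zero (b x) fun hne => hne rfl).self_of_nhds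
    rw [hwx, sub_zero, one_smul] at hgx
    exact smul_eq_zero_of_right _ hgx

section EvalAnnihilator

variable {X Y Z E F : Type*} [TopologicalSpace X] [TopologicalSpace Y] [TopologicalSpace Z]
  [NormedAddCommGroup E] [NormedSpace ℝ E] [NormedAddCommGroup F] [NormedSpace ℝ F]

/-- The ideal of all scalar functions `a` such that multiplication by `a` annihilates the functional
`f ↦ T f y`. -/
def evalAnnihilator (T : C(X, E) →ₗ[ℝ] C(Y, F)) (y : Y) : Ideal C(X, ℝ) where
  carrier := {a | ∀ f, T (a • f) y = 0}
  zero_mem' f := by rw [zero_smul, map_zero, ContinuousMap.zero_apply]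
  add_mem' ha hb f := by rw [add_smul, map_add, ContinuousMap.add_apply, ha f, hb f, add_zero]
  smul_mem' c a ha f := by
    rw [smul_eq_mul, mul_comm, mul_smul]
    exact ha (c • f)

variable {T : C(X, E) →ₗ[ℝ] C(Y, F)} {y : Y}

theorem apply_smul_eq_of_sub_mem_evalAnnihilator {a b : C(X, ℝ)}
    (h : a - b ∈ evalAnnihilator T y) (f : C(X, E)) :
    T (a • f) y = T (b • f) y := by
  have := h f
  rwa [sub_smul, map_sub, ContinuousMap.sub_apply, sub_eq_zero] at this

theorem IsPseudoprime.apply_comp_smul_congr [CompletelyRegularSpace Z]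
    (hP : IsPseudoprime (evalAnnihilator T y)) {b : C(X, Z)} {t : Z}
    (ht : MapClusterPt t (zeroFilter (evalAnnihilator T y)) b) {φ ψ : C(Z, ℝ)}
    (h : φ =ᶠ[𝓝 t] ψ) (f : C(X, E)) : T (φ.comp b • f) y = T (ψ.comp b • f) y :=
  apply_smul_eq_of_sub_mem_evalAnnihilator (hP.comp_mem_of_eventuallyEq_zero (φ := φ - ψ) ht
    (h.mono fun _ hz => sub_eq_zero.2 hz)) f

theorem IsPseudoprime.tendsto_zero_of_norm_apply_lt {ι : Type*}
    (hP : IsPseudoprime (evalAnnihilator T y)) {K : Set ℝ} (hK : IsCompact K) {b : C(X, ℝ)}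
    (hb : ∀ x, b x ∈ K) {d : ι → C(ℝ, ℝ)} {N : ℝ}
    (hd : ∀ t ∈ K, t ≠ 0 → ∃ i, ∃ c ≥ N, d i =ᶠ[𝓝 t] fun s => c * s) {f : C(X, E)}
    (hf : ∀ i, ‖T ((d i).comp b • f) y‖ < N * ‖T (b • f) y‖) :
    Tendsto b (zeroFilter (evalAnnihilator T y)) (𝓝 0) := by
  have := zeroFilter_neBot hP.ne_top
  obtain ⟨t, htK, ht⟩ := hP.exists_tendsto_of_isCompact hK (Eventually.of_forall hb)
  suffices t = 0 from this ▸ ht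
  by_contra ht0
  obtain ⟨i, c, hNc, hc⟩ := hd t htK ht0
  have hsmul : (c • b) • f = c • b • f := ContinuousMap.ext fun x => smul_assoc c (b x) (f x)
  have happly : T ((d i).comp b • f) y = c • T (b • f) y := by
    rw [hP.apply_comp_smul_congr (ψ := c • ContinuousMap.id ℝ) ht.mapClusterPt hc,
      ContinuousMap.smul_comp, ContinuousMap.id_comp, hsmul, map_smul,
      ContinuousMap.smul_apply]
  have hle : N * ‖T (b • f) y‖ ≤ ‖T ((d i).comp b • f) y‖ := by
    rw [happly, norm_smul]
    gcongr
    exact hNc.trans (le_abs_self c)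
  exact (hf i).not_ge hle

end EvalAnnihilator

/-- Linear bijections `C(X, E) → C(Y, F)` which are separating in both directions. -/
structure IsBiseparating {X Y E F : Type} [TopologicalSpace X] [TopologicalSpace Y]
    [NormedAddCommGroup E] [NormedSpace ℝ E] [NormedAddCommGroup F] [NormedSpace ℝ F]
    (T : C(X, E) ≃ₗ[ℝ] C(Y, F)) : Prop where
  separating : SeparatingC T
  separating_symm : SeparatingC T.symm

/-- `h` is the support map of `T`: the value of `T f` at `y` depends on `f` only through its
behaviour at `h y`, in the sense that scalar factors of `f` are evaluated at `h y`. -/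
def IsSupportMap {X Y E F : Type*} [TopologicalSpace X] [TopologicalSpace Y]
    [NormedAddCommGroup E] [NormedSpace ℝ E] [NormedAddCommGroup F] [NormedSpace ℝ F]
    (T : C(X, E) →ₗ[ℝ] C(Y, F)) (h : Y → X) : Prop :=
  ∀ (a : C(X, ℝ)) (f : C(X, E)) (y : Y), T (a • f) y = a (h y) • T f y

namespace IsBiseparating

variable {X Y E F : Type} [TopologicalSpace X] [TopologicalSpace Y]
  [NormedAddCommGroup E] [NormedSpace ℝ E] [NormedAddCommGroup F] [NormedSpace ℝ F]
  {T : C(X, E) ≃ₗ[ℝ] C(Y, F)} (hT : IsBiseparating T)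

include hT

theorem symm : IsBiseparating T.symm := ⟨hT.separating_symm, hT.separating⟩

variable [Nontrivial F]

theorem isPseudoprime (y : Y) : IsPseudoprime (evalAnnihilator T.toLinearMap y) where
  ne_top htop := by
    obtain ⟨v, hv⟩ := exists_ne (0 : F)
    have hone : T ((1 : C(X, ℝ)) • T.symm (.const Y v)) y = 0 :=
      (Ideal.eq_top_iff_one _).1 htop _
    rw [one_smul, T.apply_symm_apply] at hone
    exact hv hone
  mem_or_mem_of_mul_eq_zero {a b} hab := by
    refine or_iff_not_imp_left.2 fun ha g => ?_
    obtain ⟨f, hf⟩ : ∃ f, T (a • f) y ≠ 0 := not_forall.1 ha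
    have hdisjoint : ∀ x, ‖(a • f) x‖ * ‖(b • g) x‖ = 0 := fun x => by
      have habx : a x * b x = 0 := DFunLike.congr_fun hab x
      rcases mul_eq_zero.1 habx with h | h <;> simp [h]
    exact norm_eq_zero.1 <| (mul_eq_zero.1 (hT.separating _ _ hdisjoint y)).resolve_left
      (norm_ne_zero_iff.2 hf)

variable [CompletelyRegularSpace Y]

theorem apply_smul_eq_zero {f : C(X, E)} {y : Y} (hf : T f =ᶠ[𝓝 y] 0) (a : C(X, ℝ)) :
    T (a • f) y = 0 := by
  obtain ⟨v, hv⟩ := exists_ne (0 : F)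
  obtain ⟨w, hw_one, hw_zero⟩ := exists_eventuallyEq_one_eventuallyEq_zero hf
  let k : C(Y, F) := w • .const Y v
  have hk : k y ≠ 0 := smul_ne_zero (by simp [hw_one.self_of_nhds]) hv
  have hfk : ∀ x, ‖T.symm (T f) x‖ * ‖T.symm k x‖ = 0 := by
    refine hT.separating_symm _ _ fun z => ?_
    by_cases hz : T f z = 0
    · simp [hz]
    · simp [k, (hw_zero z hz).self_of_nhds]
  have hafk : ∀ x, ‖(a • f) x‖ * ‖T.symm k x‖ = 0 := fun x => by
    rw [ContinuousMap.smul_apply', norm_smul, mul_assoc, ← T.symm_apply_apply f, hfk, mul_zero]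
  have hafk_apply := hT.separating _ _ hafk y
  rw [T.apply_symm_apply] at hafk_apply
  exact norm_eq_zero.1 ((mul_eq_zero.1 hafk_apply).resolve_right (norm_ne_zero_iff.2 hk))

theorem apply_smul_congr {f g : C(X, E)} {y : Y} (hfg : T f =ᶠ[𝓝 y] T g) (a : C(X, ℝ)) :
    T (a • f) y = T (a • g) y := by
  have hsub : T (f - g) =ᶠ[𝓝 y] 0 := by
    filter_upwards [hfg] with z hz
    rw [map_sub, ContinuousMap.sub_apply, hz, sub_self, Pi.zero_apply]
  have := hT.apply_smul_eq_zero hsub a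
  rwa [smul_sub, map_sub, ContinuousMap.sub_apply, sub_eq_zero] at this

theorem mem_evalAnnihilator_of_eventually_tendsto_zero {b : C(X, ℝ)} {y : Y}
    (hb : ∀ᶠ z in 𝓝 y, Tendsto b (zeroFilter (evalAnnihilator T.toLinearMap z)) (𝓝 0)) :
    b ∈ evalAnnihilator T.toLinearMap y := by
  intro f
  obtain ⟨w, hw_one, hw_zero⟩ := exists_eventuallyEq_one_eventuallyEq_zero hb
  let g : C(X, E) := T.symm (w • T f)
  have hTg : T g = w • T f := T.apply_symm_apply _
  have hTfg : T f =ᶠ[𝓝 y] T g := by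
    filter_upwards [hw_one] with z hz
    rw [hTg, ContinuousMap.smul_apply', hz, Pi.one_apply, one_smul]
  have hφg : ∀ φ : C(ℝ, ℝ), φ =ᶠ[𝓝 0] 0 → φ.comp b • g = 0 := by
    intro φ hφ
    refine (map_eq_zero_iff T T.injective).1 (ContinuousMap.ext fun z => ?_)
    by_cases hz : Tendsto b (zeroFilter (evalAnnihilator T.toLinearMap z)) (𝓝 0)
    · have := zeroFilter_neBot (hT.isPseudoprime z).ne_top
      exact (hT.isPseudoprime z).comp_mem_of_eventuallyEq_zero hz.mapClusterPt hφ g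
    · refine hT.apply_smul_eq_zero ?_ _
      filter_upwards [hw_zero z hz] with z' hz'
      rw [hTg, ContinuousMap.smul_apply', hz', Pi.zero_apply, zero_smul, Pi.zero_apply]
  have hbg : b • g = 0 := smul_eq_zero_of_forall_comp_smul_eq_zero hφg
  calc T (b • f) y = T (b • g) y := hT.apply_smul_congr hTfg b
    _ = 0 := by rw [hbg, map_zero, ContinuousMap.zero_apply]

theorem mem_evalAnnihilator_of_tendsto_zero {b : C(X, ℝ)} {y : Y}
    (hb : Tendsto b (zeroFilter (evalAnnihilator T.toLinearMap y)) (𝓝 0)) :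
    b ∈ evalAnnihilator T.toLinearMap y := by
  intro f
  by_contra hne
  obtain ⟨d, hd⟩ := exists_locally_linear_steep
  obtain ⟨N, hN⟩ : ∃ N : ℝ, ∀ i, ‖T ((d i).comp b • f) y‖ < N * ‖T (b • f) y‖ :=
    (eventually_all.2 fun i => (tendsto_id.atTop_mul_const
      (norm_pos_iff.2 hne)).eventually_gt_atTop ‖T ((d i).comp b • f) y‖).exists
  obtain ⟨ε, hε, hdε⟩ :=
    (nhdsWithin_hasBasis Metric.nhds_basis_closedBall _).eventually_iff.1 (hd N)
  obtain ⟨clamp, hclamp_eq, hclamp_mem⟩ := exists_eventuallyEq_id_mem_closedBall hε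
  -- Truncating `b` does not change the values at `y`, and makes `b` converge at nearby points.
  have hTclamp : ∀ φ : C(ℝ, ℝ), T (φ.comp (clamp.comp b) • f) y = T (φ.comp b • f) y := by
    intro φ
    have := zeroFilter_neBot (hT.isPseudoprime y).ne_top
    exact (hT.isPseudoprime y).apply_comp_smul_congr (φ := φ.comp clamp) hb.mapClusterPt
      (hclamp_eq.fun_comp φ) f
  have hTclamp_id : T (clamp.comp b • f) y = T (b • f) y := hTclamp (.id ℝ)
  have hnear : ∀ᶠ z in 𝓝 y, ∀ i,
      ‖T ((d i).comp (clamp.comp b) • f) z‖ < N * ‖T (clamp.comp b • f) z‖ := by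
    refine eventually_all.2 fun i => ContinuousAt.eventually_lt (by fun_prop) (by fun_prop) ?_
    rw [hTclamp, hTclamp_id]
    exact hN i
  have hlim : ∀ᶠ z in 𝓝 y,
      Tendsto (clamp.comp b) (zeroFilter (evalAnnihilator T.toLinearMap z)) (𝓝 0) :=
    hnear.mono fun z hz => (hT.isPseudoprime z).tendsto_zero_of_norm_apply_lt
      (isCompact_closedBall 0 ε) (fun x => hclamp_mem (b x)) (fun t ht ht0 => hdε ⟨ht, ht0⟩) hz
  exact hne (hTclamp_id ▸ hT.mem_evalAnnihilator_of_eventually_tendsto_zero hlim f)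

theorem exists_isSupportMap (hX : Realcompact X) : ∃ h : Y → X, IsSupportMap T.toLinearMap h := by
  have hpoint : ∀ y, ∃ x, zeroFilter (evalAnnihilator T.toLinearMap y) ≤ 𝓝 x := fun y =>
    have := zeroFilter_neBot (hT.isPseudoprime y).ne_top
    hX.exists_le_nhds <|
      (hT.isPseudoprime y).exists_tendsto fun _ => hT.mem_evalAnnihilator_of_tendsto_zero
  choose h hh using hpoint
  refine ⟨h, fun a f y => ?_⟩
  have ha : Tendsto (a - .const X (a (h y)) : C(X, ℝ))
      (zeroFilter (evalAnnihilator T.toLinearMap y)) (𝓝 0) :=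
    tendsto_sub_nhds_zero_iff.2 ((a.continuous.tendsto (h y)).mono_left (hh y))
  calc T (a • f) y = T (ContinuousMap.const X (a (h y)) • f) y :=
        apply_smul_eq_of_sub_mem_evalAnnihilator (hT.mem_evalAnnihilator_of_tendsto_zero ha) f
    _ = (a (h y) • T f) y := by rw [← map_smul]; rfl

end IsBiseparating

instance instContinuousSMulContinuousMap {Y R M : Type*} [TopologicalSpace Y]
    [PseudoMetricSpace R] [PseudoMetricSpace M] [Semiring R] [AddCommMonoid M] [Module R M]
    [IsBoundedSMul R M] :
    ContinuousSMul C(Y, R) C(Y, M) where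
  continuous_smul := by
    refine continuous_iff_continuousAt.2 fun ⟨u, g⟩ => ?_
    refine ContinuousMap.tendsto_iff_forall_isCompact_tendstoUniformlyOn.2 fun K hK => ?_
    have hu := ContinuousMap.tendsto_iff_forall_isCompact_tendstoUniformlyOn.1
      (continuous_fst.tendsto (u, g)) K hK
    have hg := ContinuousMap.tendsto_iff_forall_isCompact_tendstoUniformlyOn.1
      (continuous_snd.tendsto (u, g)) K hK
    exact (tendstoLocallyUniformlyOn_iff_tendstoUniformlyOn_of_compact hK).1 <|
      hu.tendstoLocallyUniformlyOn.smul₀ hg.tendstoLocallyUniformlyOn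
        u.continuous.continuousOn g.continuous.continuousOn

namespace IsSupportMap

variable {X Y E F : Type*} [TopologicalSpace X] [TopologicalSpace Y]
  [NormedAddCommGroup E] [NormedSpace ℝ E] [NormedAddCommGroup F] [NormedSpace ℝ F]
  {T : C(X, E) →ₗ[ℝ] C(Y, F)} {h : Y → X} (hT : IsSupportMap T h)

include hT

theorem continuous_comp [Nontrivial F] (hsurj : Function.Surjective T) (a : C(X, ℝ)) :
    Continuous (a ∘ h) := by
  obtain ⟨v, hv⟩ := exists_ne (0 : F)
  obtain ⟨f, hf⟩ := hsurj (.const Y v)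
  refine (isClosedEmbedding_smul_left (𝕜 := ℝ) hv).isInducing.continuous_iff.2 ?_
  refine (T (a • f)).continuous.congr fun y => ?_
  rw [hT a f y, hf]
  rfl

variable [FiniteDimensional ℝ E]

theorem apply_eq_sum (f : C(X, E)) (y : Y) :
    T f y = ∑ i, (Module.finBasis ℝ E).coord i (f (h y)) •
      T (.const X (Module.finBasis ℝ E i)) y := by
  let coordC (i) : C(E, ℝ) :=
    ⟨(Module.finBasis ℝ E).coord i, LinearMap.continuous_of_finiteDimensional _⟩
  have hf : f = ∑ i, (coordC i).comp f • .const X (Module.finBasis ℝ E i) := by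
    ext x
    rw [ContinuousMap.sum_apply]
    exact ((Module.finBasis ℝ E).sum_repr (f x)).symm
  conv_lhs => rw [hf, map_sum, ContinuousMap.sum_apply]
  exact Finset.sum_congr rfl fun i _ => hT _ _ _

theorem apply_eq_apply_const (f : C(X, E)) (y : Y) : T f y = T (.const X (f (h y))) y := by
  rw [hT.apply_eq_sum f, hT.apply_eq_sum (.const X (f (h y))), ContinuousMap.const_apply]

theorem continuous (hh : Continuous h) : Continuous T := by
  let coordC (i) : C(E, ℝ) :=
    ⟨(Module.finBasis ℝ E).coord i, LinearMap.continuous_of_finiteDimensional _⟩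
  have hTf : ∀ f, T f = ∑ i, (coordC i).comp (f.comp ⟨h, hh⟩) •
      T (.const X (Module.finBasis ℝ E i)) := fun f => by
    ext y
    rw [hT.apply_eq_sum f y, ContinuousMap.sum_apply]
    rfl
  have hcoord (i) : Continuous fun f : C(X, E) => (coordC i).comp (f.comp ⟨h, hh⟩) :=
    (coordC i).continuous_postcomp.comp (ContinuousMap.continuous_precomp _)
  rw [funext hTf]
  exact continuous_finsetSum _ fun i _ => (hcoord i).smul continuous_const

theorem finiteDimensional [Nonempty Y] (hsurj : Function.Surjective T) :
    FiniteDimensional ℝ F := by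
  obtain ⟨y⟩ := ‹Nonempty Y›
  let evalConst : E →ₗ[ℝ] F :=
    (ContinuousMap.evalCLM ℝ y).toLinearMap ∘ₗ T ∘ₗ (ContinuousLinearMap.const ℝ X).toLinearMap
  refine Module.Finite.of_surjective evalConst fun v => ?_
  obtain ⟨f, hf⟩ := hsurj (.const Y v)
  refine ⟨f (h y), ?_⟩
  calc T (.const X (f (h y))) y = T f y := (hT.apply_eq_apply_const f y).symm
    _ = v := by rw [hf, ContinuousMap.const_apply]

end IsSupportMap

namespace IsBiseparating

variable {X Y E F : Type} [TopologicalSpace X] [TopologicalSpace Y] [CompletelyRegularSpace Y]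
  [NormedAddCommGroup E] [NormedSpace ℝ E] [FiniteDimensional ℝ E]
  [NormedAddCommGroup F] [NormedSpace ℝ F] [Nontrivial F]
  {T : C(X, E) ≃ₗ[ℝ] C(Y, F)} (hT : IsBiseparating T) (hX : Realcompact X)

include hT hX

theorem continuous : Continuous T := by
  obtain ⟨h, hh⟩ := hT.exists_isSupportMap hX
  exact hh.continuous (hX.continuous_of_forall_comp (hh.continuous_comp T.surjective))

theorem finiteDimensional [Nonempty Y] : FiniteDimensional ℝ F := by
  obtain ⟨h, hh⟩ := hT.exists_isSupportMap hX
  exact hh.finiteDimensional T.surjective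

theorem continuous_symm [CompletelyRegularSpace X] [Nontrivial E] (hY : Realcompact Y) :
    Continuous T.symm := by
  cases isEmpty_or_nonempty Y
  · exact continuous_of_const fun f g => congrArg T.symm (ContinuousMap.ext isEmptyElim)
  · have := hT.finiteDimensional hX
    exact hT.symm.continuous hY

end IsBiseparating

/-- The spaces `C(X,E)` and `C(Y,F)` carry the compact-open topology (the default topology
on `C(·,·)` in Mathlib); a linear biseparating map between them, with finite-dimensional `E`,
is a homeomorphism for these topologies. -/
theorem stmt8 {𝕂 X Y E F : Type} [RCLike 𝕂]
    [TopologicalSpace X] [CompletelyRegularSpace X] [T2Space X]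
    [TopologicalSpace Y] [CompletelyRegularSpace Y] [T2Space Y]
    [NormedAddCommGroup E] [NormedSpace 𝕂 E] [Nontrivial E] [FiniteDimensional 𝕂 E]
    [NormedAddCommGroup F] [NormedSpace 𝕂 F] [Nontrivial F]
    (hX : Realcompact X) (hY : Realcompact Y)
    (T : C(X, E) ≃ₗ[𝕂] C(Y, F)) (hT : SeparatingC ⇑T) (hT' : SeparatingC ⇑T.symm) :
    Continuous ⇑T ∧ Continuous ⇑T.symm := by
  let : NormedSpace ℝ E := NormedSpace.restrictScalars ℝ 𝕂 E
  let : NormedSpace ℝ F := NormedSpace.restrictScalars ℝ 𝕂 F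
  have : IsScalarTower ℝ 𝕂 E := .of_algebraMap_smul fun _ _ => rfl
  have : IsScalarTower ℝ 𝕂 F := .of_algebraMap_smul fun _ _ => rfl
  have : FiniteDimensional ℝ E := Module.Finite.trans 𝕂 E
  have hTR : IsBiseparating (T.restrictScalars ℝ) := ⟨hT, hT'⟩
  exact ⟨hTR.continuous hX, hTR.continuous_symm hX hY⟩
end
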